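/- arXiv:math/9806050 — 5 statements merged into one kernel-verified Lean document; each statement's English description precedes it below -/
import Mathlib

section
/- (Embedding theorem of Fenn–Keyman–Rourke.) For every n ≥ 3, the natural monoid homomorphism from the singular braid monoid SB_n to the group SG_n (sending σ_i ↦ σ_i, σ̄_i ↦ σ_i⁻¹, τ_i ↦ τ_i) is injective. -/
/-!
The proof is a Magnus-type argument. All defining relations of `SB_n` involving some `τ_i` are either
of the form `β τ_i = τ_j β` with `β` a word in the `σ_i`, or say that `τ_i` and `τ_j` commute. Hence
they survive the substitution `σ_i ↦ σ_i`, `τ_i ↦ 1 + X τ_i` in the power series ring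
`ℤ[SB_n]⟦X⟧` over the monoid ring, with `X` a central variable. There the elements `1 + X τ_i`
are invertible, so the substitution defines a homomorphism `magnus` from `SG_n` to the group of
units of this ring.

The image of `w ∈ SB_n` under `SB_n → SG_n → ℤ[SB_n]⟦X⟧ˣ` is a product of factors `σ`, `σ⁻¹` and
`1 + X τ`; it is a polynomial in `X` whose top coefficient is the basis element `w` itself
(`HasTop.const_mul`, `HasTop.lin_mul`). So `w` can be recovered from its image (`HasTop.unique`),
and `SB_n → SG_n` is injective.
-/

/-- Generators of the singular braid monoid on `n` strands:
`σ_1, …, σ_{n-1}`, `σ̄_1, …, σ̄_{n-1}`, `τ_1, …, τ_{n-1}` (indexed from `0`, so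
index `i : Fin (n-1)` corresponds to the subscript `i + 1`). -/
inductive SBnGen (n : ℕ) : Type
  | s : Fin (n - 1) → SBnGen n
  | sb : Fin (n - 1) → SBnGen n
  | t : Fin (n - 1) → SBnGen n

open FreeMonoid in
/-- Defining relations of the singular braid monoid on `n` strands. -/
inductive SBnRel (n : ℕ) : FreeMonoid (SBnGen n) → FreeMonoid (SBnGen n) → Prop
  | inv_right (i : Fin (n - 1)) : SBnRel n (of (.s i) * of (.sb i)) 1
  | inv_left (i : Fin (n - 1)) : SBnRel n (of (.sb i) * of (.s i)) 1
  | braid (i j : Fin (n - 1)) (h : (j : ℕ) = (i : ℕ) + 1) :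
      SBnRel n (of (.s i) * of (.s j) * of (.s i)) (of (.s j) * of (.s i) * of (.s j))
  | comm_ss (i j : Fin (n - 1)) (h : (i : ℕ) + 1 < (j : ℕ)) :
      SBnRel n (of (.s i) * of (.s j)) (of (.s j) * of (.s i))
  | tau_sigma (i j : Fin (n - 1)) (h : (j : ℕ) = (i : ℕ) + 1) :
      SBnRel n (of (.t j) * of (.s i) * of (.s j)) (of (.s i) * of (.s j) * of (.t i))
  | sigma_tau (i j : Fin (n - 1)) (h : (j : ℕ) = (i : ℕ) + 1) :
      SBnRel n (of (.s j) * of (.s i) * of (.t j)) (of (.t i) * of (.s j) * of (.s i))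
  | comm_st (i : Fin (n - 1)) : SBnRel n (of (.s i) * of (.t i)) (of (.t i) * of (.s i))
  | comm_st' (i j : Fin (n - 1)) (h : (i : ℕ) + 1 < (j : ℕ)) :
      SBnRel n (of (.s i) * of (.t j)) (of (.t j) * of (.s i))
  | comm_ts' (i j : Fin (n - 1)) (h : (i : ℕ) + 1 < (j : ℕ)) :
      SBnRel n (of (.s j) * of (.t i)) (of (.t i) * of (.s j))
  | comm_tt (i j : Fin (n - 1)) (h : (i : ℕ) + 1 < (j : ℕ)) :
      SBnRel n (of (.t i) * of (.t j)) (of (.t j) * of (.t i))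

/-- The singular braid monoid on `n` strands. -/
abbrev SBn (n : ℕ) : Type := PresentedMonoid (SBnRel n)

/-- The generators of `SBn n` as elements. -/
abbrev SBn.g (n : ℕ) (x : SBnGen n) : SBn n := PresentedMonoid.of (SBnRel n) x

/-- The generator `σ_{i+1}` of the free group on the generators of `SG_n`. -/
abbrev SGn.S (n : ℕ) (i : Fin (n - 1)) : FreeGroup (Fin (n - 1) ⊕ Fin (n - 1)) :=
  FreeGroup.of (.inl i)
/-- The generator `τ_{i+1}` of the free group on the generators of `SG_n`. -/
abbrev SGn.T (n : ℕ) (i : Fin (n - 1)) : FreeGroup (Fin (n - 1) ⊕ Fin (n - 1)) :=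
  FreeGroup.of (.inr i)

open SGn in
/-- The relators of the group `SG_n`: the same relations as for `SB_n`,
with `σ̄_i` replaced by `σ_i⁻¹`. -/
def SGnRels (n : ℕ) : Set (FreeGroup (Fin (n - 1) ⊕ Fin (n - 1))) :=
  {r | (∃ i j : Fin (n - 1), (j : ℕ) = (i : ℕ) + 1 ∧
          r = S n i * S n j * S n i * (S n j * S n i * S n j)⁻¹) ∨
       (∃ i j : Fin (n - 1), (i : ℕ) + 1 < (j : ℕ) ∧
          r = S n i * S n j * (S n j * S n i)⁻¹) ∨
       (∃ i j : Fin (n - 1), (j : ℕ) = (i : ℕ) + 1 ∧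
          r = T n j * S n i * S n j * (S n i * S n j * T n i)⁻¹) ∨
       (∃ i j : Fin (n - 1), (j : ℕ) = (i : ℕ) + 1 ∧
          r = S n j * S n i * T n j * (T n i * S n j * S n i)⁻¹) ∨
       (∃ i : Fin (n - 1), r = S n i * T n i * (T n i * S n i)⁻¹) ∨
       (∃ i j : Fin (n - 1), (i : ℕ) + 1 < (j : ℕ) ∧
          r = S n i * T n j * (T n j * S n i)⁻¹) ∨
       (∃ i j : Fin (n - 1), (i : ℕ) + 1 < (j : ℕ) ∧
          r = S n j * T n i * (T n i * S n j)⁻¹) ∨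
       (∃ i j : Fin (n - 1), (i : ℕ) + 1 < (j : ℕ) ∧
          r = T n i * T n j * (T n j * T n i)⁻¹)}

/-- The group `SG_n`. -/
abbrev SGn (n : ℕ) : Type := PresentedGroup (SGnRels n)

open PowerSeries

/-- The coefficient ring: the integral monoid ring of `SB_n`. -/
abbrev SBnRing (n : ℕ) : Type := MonoidAlgebra ℤ (SBn n)

/-- An element of `SB_n` as a constant power series over `ℤ[SB_n]`. -/
noncomputable def constSeries (n : ℕ) : SBn n →* (SBnRing n)⟦X⟧ :=
  (PowerSeries.C (R := SBnRing n)).toMonoidHom.comp (MonoidAlgebra.of ℤ (SBn n))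

/-- The linear series `1 + X m` attached to `m ∈ SB_n`. -/
noncomputable def linSeries (n : ℕ) (m : SBn n) : (SBnRing n)⟦X⟧ :=
  1 + X * constSeries n m

lemma coeff_constSeries_mul (n : ℕ) (m : SBn n) (f : (SBnRing n)⟦X⟧) (k : ℕ) :
    coeff k (constSeries n m * f) = MonoidAlgebra.of ℤ (SBn n) m * coeff k f :=
  PowerSeries.coeff_C_mul k f _

lemma constSeries_mul_linSeries {n : ℕ} {a b d : SBn n} (h : a * b = d * a) :
    constSeries n a * linSeries n b = linSeries n d * constSeries n a := by
  have hX : constSeries n a * X = X * constSeries n a := (commute_X _).eq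
  rw [linSeries, linSeries, mul_add, add_mul, mul_one, one_mul, ← mul_assoc, hX, mul_assoc,
    mul_assoc, ← map_mul, ← map_mul, h]

lemma linSeries_comm {n : ℕ} {a b : SBn n} (h : a * b = b * a) :
    linSeries n a * linSeries n b = linSeries n b * linSeries n a := by
  have hab : Commute (constSeries n a) (constSeries n b) := Commute.map h (constSeries n)
  have hl : Commute (X * constSeries n a) (X * constSeries n b) :=
    ((commute_X _).symm.mul_right ((commute_X _).symm)).mul_left ((commute_X _).mul_right hab)
  exact (((Commute.one_left _).add_left ((Commute.one_right _).add_right hl))).eq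

/-- A series with constant term `1` over a (noncommutative) ring is invertible. -/
lemma isUnit_linSeries (n : ℕ) (m : SBn n) : IsUnit (linSeries n m) := by
  rw [PowerSeries.isUnit_iff_constantCoeff]
  simp [linSeries]

lemma SBn.rel_eq {n : ℕ} {a b : FreeMonoid (SBnGen n)} (h : SBnRel n a b) :
    PresentedMonoid.mk (SBnRel n) a = PresentedMonoid.mk (SBnRel n) b :=
  PresentedMonoid.mk_eq_mk_of_rel h

/-- The images in `ℤ[SB_n]⟦X⟧ˣ` of the generators of `SG_n`: `σ_i` is kept, and `τ_i` is sent
to `1 + X τ_i`. -/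
noncomputable def genUnit (n : ℕ) : Fin (n - 1) ⊕ Fin (n - 1) → ((SBnRing n)⟦X⟧)ˣ
  | .inl i =>
    { val := constSeries n (SBn.g n (.s i))
      inv := constSeries n (SBn.g n (.sb i))
      val_inv := by
        rw [← map_mul, ← map_one (constSeries n)]
        exact congrArg _ (SBn.rel_eq (.inv_right i))
      inv_val := by
        rw [← map_mul, ← map_one (constSeries n)]
        exact congrArg _ (SBn.rel_eq (.inv_left i)) }
  | .inr i => (isUnit_linSeries n (SBn.g n (.t i))).unit

lemma genUnit_inl (n : ℕ) (i : Fin (n - 1)) :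
    (genUnit n (.inl i) : (SBnRing n)⟦X⟧) = constSeries n (SBn.g n (.s i)) := rfl

lemma genUnit_inl_inv (n : ℕ) (i : Fin (n - 1)) :
    (((genUnit n (.inl i))⁻¹ : ((SBnRing n)⟦X⟧)ˣ) : (SBnRing n)⟦X⟧) =
      constSeries n (SBn.g n (.sb i)) := rfl

lemma genUnit_inr (n : ℕ) (i : Fin (n - 1)) :
    (genUnit n (.inr i) : (SBnRing n)⟦X⟧) = linSeries n (SBn.g n (.t i)) := rfl

lemma genUnit_rels (n : ℕ) :
    ∀ r ∈ SGnRels n, FreeGroup.lift (genUnit n) r = 1 := by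
  rintro r (⟨i, j, h, rfl⟩ | ⟨i, j, h, rfl⟩ | ⟨i, j, h, rfl⟩ | ⟨i, j, h, rfl⟩ | ⟨i, rfl⟩ |
    ⟨i, j, h, rfl⟩ | ⟨i, j, h, rfl⟩ | ⟨i, j, h, rfl⟩) <;>
  rw [map_mul, map_inv, mul_inv_eq_one] <;>
  simp only [map_mul, FreeGroup.lift_apply_of] <;>
  apply Units.ext <;>
  simp only [Units.val_mul, genUnit_inl, genUnit_inr]
  · simp only [← map_mul]
    exact congrArg _ (SBn.rel_eq (.braid i j h))
  · simp only [← map_mul]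
    exact congrArg _ (SBn.rel_eq (.comm_ss i j h))
  · rw [mul_assoc, ← map_mul]
    refine (constSeries_mul_linSeries ?_).symm
    rw [← mul_assoc (SBn.g n (.t j))]
    exact (SBn.rel_eq (.tau_sigma i j h)).symm
  · rw [mul_assoc (linSeries n _), ← map_mul]
    refine constSeries_mul_linSeries ?_
    rw [← mul_assoc (SBn.g n (.t i))]
    exact SBn.rel_eq (.sigma_tau i j h)
  · exact constSeries_mul_linSeries (SBn.rel_eq (.comm_st i))
  · exact constSeries_mul_linSeries (SBn.rel_eq (.comm_st' i j h))
  · exact constSeries_mul_linSeries (SBn.rel_eq (.comm_ts' i j h))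
  · exact linSeries_comm (SBn.rel_eq (.comm_tt i j h))

/-- The Magnus-type representation of `SG_n` by units of `ℤ[SB_n]⟦X⟧`. -/
noncomputable def magnus (n : ℕ) : SGn n →* ((SBnRing n)⟦X⟧)ˣ :=
  PresentedGroup.toGroup (genUnit_rels n)

/-- `f` is a polynomial in `X` whose top coefficient is the basis element `w` of `ℤ[SB_n]`. -/
def HasTop {n : ℕ} (f : (SBnRing n)⟦X⟧) (w : SBn n) : Prop :=
  ∃ d : ℕ, coeff d f = MonoidAlgebra.of ℤ (SBn n) w ∧ ∀ k, d < k → coeff k f = 0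

lemma HasTop.const_mul {n : ℕ} {f : (SBnRing n)⟦X⟧} {w : SBn n} (hf : HasTop f w) (m : SBn n) :
    HasTop (constSeries n m * f) (m * w) := by
  obtain ⟨d, hd, hk⟩ := hf
  refine ⟨d, ?_, fun k h => ?_⟩
  · rw [coeff_constSeries_mul, hd, map_mul]
  · rw [coeff_constSeries_mul, hk k h, mul_zero]

lemma HasTop.lin_mul {n : ℕ} {f : (SBnRing n)⟦X⟧} {w : SBn n} (hf : HasTop f w) (m : SBn n) :
    HasTop (linSeries n m * f) (m * w) := by
  obtain ⟨d, hd, hk⟩ := hf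
  have key : ∀ k, d ≤ k → coeff (k + 1) (linSeries n m * f) =
      MonoidAlgebra.of ℤ (SBn n) m * coeff k f := fun k h => by
    rw [linSeries, add_mul, one_mul, mul_assoc, map_add, hk (k + 1) (by omega), zero_add,
      coeff_succ_X_mul, coeff_constSeries_mul]
  refine ⟨d + 1, ?_, fun k h => ?_⟩
  · rw [key d le_rfl, hd, map_mul]
  · obtain ⟨k, rfl⟩ : ∃ l, k = l + 1 := ⟨k - 1, by omega⟩
    rw [key k (by omega), hk k (by omega), mul_zero]

/-- The top coefficient is unique, since basis elements of `ℤ[SB_n]` are nonzero. -/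
lemma HasTop.unique {n : ℕ} {f : (SBnRing n)⟦X⟧} {v w : SBn n} (hv : HasTop f v)
    (hw : HasTop f w) : v = w := by
  obtain ⟨d, hd, hd'⟩ := hv
  obtain ⟨e, he, he'⟩ := hw
  have hne : ∀ u : SBn n, MonoidAlgebra.of ℤ (SBn n) u ≠ 0 := fun u => by
    simp
  have hde : d = e := by
    rcases lt_trichotomy d e with h | h | h
    · exact absurd (he.symm.trans (hd' e h)) (hne w)
    · exact h
    · exact absurd (hd.symm.trans (he' d h)) (hne v)
  subst hde
  exact MonoidAlgebra.of_injective (hd.symm.trans he)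

/-- embedding theorem of Fenn–Keyman–Rourke: for `n ≥ 3`, the
natural homomorphism `SB_n → SG_n` sending `σ_i ↦ σ_i`, `σ̄_i ↦ σ_i⁻¹`,
`τ_i ↦ τ_i` is injective. -/
theorem sbn_embeds_in_sgn (n : ℕ) (hn : 3 ≤ n) (φ : SBn n →* SGn n)
    (hs : ∀ i : Fin (n - 1), φ (SBn.g n (.s i)) = PresentedGroup.of (.inl i))
    (hsb : ∀ i : Fin (n - 1), φ (SBn.g n (.sb i)) = (PresentedGroup.of (.inl i))⁻¹)
    (ht : ∀ i : Fin (n - 1), φ (SBn.g n (.t i)) = PresentedGroup.of (.inr i)) :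
    Function.Injective φ := by
  have top : ∀ w : SBn n, HasTop (magnus n (φ w) : (SBnRing n)⟦X⟧) w := by
    intro w
    have hw : w ∈ Submonoid.closure (Set.range (PresentedMonoid.of (SBnRel n))) := by
      rw [PresentedMonoid.closure_range_of]
      trivial
    induction hw using Submonoid.closure_induction_left with
    | one =>
      refine ⟨0, by simp [MonoidAlgebra.one_def], fun k hk => ?_⟩
      simp [coeff_one, hk.ne']
    | mul_left x hx y hy ih =>
      obtain ⟨g, rfl⟩ := hx
      rw [map_mul, map_mul, Units.val_mul]
      cases g with
      | s i =>
        rw [hs, magnus, PresentedGroup.toGroup.of, genUnit_inl]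
        exact ih.const_mul _
      | sb i =>
        rw [hsb, map_inv, magnus, PresentedGroup.toGroup.of, genUnit_inl_inv]
        exact ih.const_mul _
      | t i =>
        rw [ht, magnus, PresentedGroup.toGroup.of, genUnit_inr]
        exact ih.lin_mul _
  intro v w h
  have hv := top v
  rw [h] at hv
  exact hv.unique (top w)
end

section
/- There is a (unique) monoid homomorphism β_s : SB_3 → M₂(R) with β_s(σ_1) = [[−t, 1], [0, 1]], β_s(σ_2) = [[1, 0], [t, −t]], β_s(τ_1) = [[1−y−ty, y], [0, 1]], β_s(σ̄_1) = [[−t⁻¹, t⁻¹], [0, 1]], β_s(σ̄_2) = [[1, 0], [1, −t⁻¹]], and β_s(τ_2) = β_s(σ_1) β_s(σ_2) β_s(τ_1) β_s(σ̄_2) β_s(σ̄_1); that is, these six matrices satisfy all the defining relations of SB_3. -/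
/-!
Over any commutative ring with `t * u = 1`, the prescribed matrices for `σ₁, σ₂, σ̄₁, σ̄₂` satisfy
the braid group relations, and `τ₁ = 1 + y (σ₁ - 1)`. Since `σ₁ σ₂` conjugates `σ₁` to `σ₂`, the
five-fold product prescribed for `τ₂` equals `1 + y (σ₂ - 1)` (`burauTau2_eq`). With this closed form
every relation becomes a polynomial identity in the entries (`burauMatrix_rel`), so the universal
property of the presented monoid yields the homomorphism. It is unique because a homomorphism out
of a presented monoid is determined by its values on the generators.
-/

/-- Generators of the singular braid monoid on 3 strands. -/
inductive SB3Gen : Type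
  | s1 | s2 | sb1 | sb2 | t1 | t2

open FreeMonoid in
/-- Defining relations of the singular braid monoid on 3 strands. -/
inductive SB3Rel : FreeMonoid SB3Gen → FreeMonoid SB3Gen → Prop
  | inv_s1 : SB3Rel (of .s1 * of .sb1) 1
  | inv_s1' : SB3Rel (of .sb1 * of .s1) 1
  | inv_s2 : SB3Rel (of .s2 * of .sb2) 1
  | inv_s2' : SB3Rel (of .sb2 * of .s2) 1
  | braid : SB3Rel (of .s1 * of .s2 * of .s1) (of .s2 * of .s1 * of .s2)
  | tau_s : SB3Rel (of .t2 * of .s1 * of .s2) (of .s1 * of .s2 * of .t1)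
  | s_tau : SB3Rel (of .s2 * of .s1 * of .t2) (of .t1 * of .s2 * of .s1)
  | comm1 : SB3Rel (of .s1 * of .t1) (of .t1 * of .s1)
  | comm2 : SB3Rel (of .s2 * of .t2) (of .t2 * of .s2)

/-- The singular braid monoid on 3 strands. -/
abbrev SB3 : Type := PresentedMonoid SB3Rel

/-- The generators of `SB3` as elements. -/
abbrev SB3.g (x : SB3Gen) : SB3 := PresentedMonoid.of SB3Rel x

noncomputable section

open LaurentPolynomial Polynomial

/-- `R = ℤ[t,t⁻¹][y]`. -/
abbrev RR : Type := Polynomial (LaurentPolynomial ℤ)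

/-- The element `t` of `R`. -/
abbrev Rt : RR := Polynomial.C (LaurentPolynomial.T 1)
/-- The element `t⁻¹` of `R`. -/
abbrev Rtinv : RR := Polynomial.C (LaurentPolynomial.T (-1))
/-- The element `y` of `R`. -/
abbrev Ry : RR := Polynomial.X

/-- The defining property of the singular Burau representation. -/
def IsSingularBurau (φ : SB3 →* Matrix (Fin 2) (Fin 2) RR) : Prop :=
  φ (SB3.g .s1) = !![-Rt, 1; 0, 1] ∧
  φ (SB3.g .s2) = !![1, 0; Rt, -Rt] ∧
  φ (SB3.g .t1) = !![1 - Ry - Rt * Ry, Ry; 0, 1] ∧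
  φ (SB3.g .sb1) = !![-Rtinv, Rtinv; 0, 1] ∧
  φ (SB3.g .sb2) = !![1, 0; 1, -Rtinv] ∧
  φ (SB3.g .t2) =
    !![-Rt, 1; 0, 1] * !![1, 0; Rt, -Rt] * !![1 - Ry - Rt * Ry, Ry; 0, 1] *
      !![1, 0; 1, -Rtinv] * !![-Rtinv, Rtinv; 0, 1]

end

section BurauMatrices

variable {A : Type*} [CommRing A]

/-- The Burau matrices over a commutative ring `A`, with `u` playing the role of `t⁻¹`. The value at
`t2` is `1 + y (σ₂ - 1)`, just as the value at `t1` is `1 + y (σ₁ - 1)`. -/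
def burauMatrix (t u y : A) : SB3Gen → Matrix (Fin 2) (Fin 2) A
  | .s1 => !![-t, 1; 0, 1]
  | .s2 => !![1, 0; t, -t]
  | .sb1 => !![-u, u; 0, 1]
  | .sb2 => !![1, 0; 1, -u]
  | .t1 => !![1 - y - t * y, y; 0, 1]
  | .t2 => !![1, 0; t * y, 1 - y - t * y]

/-- The prescribed conjugate `σ₁ σ₂ τ₁ σ₂⁻¹ σ₁⁻¹` in closed form. -/
lemma burauTau2_eq {t u : A} (y : A) (h : t * u = 1) :
    !![-t, 1; 0, 1] * !![1, 0; t, -t] * !![1 - y - t * y, y; 0, 1] * !![1, 0; 1, -u] *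
      !![-u, u; 0, 1] = burauMatrix t u y .t2 := by
  ext i j
  fin_cases i <;> fin_cases j <;> simp [burauMatrix, Matrix.mul_apply, Fin.sum_univ_two] <;> grind

lemma burauMatrix_rel {t u : A} (y : A) (h : t * u = 1) (a b : FreeMonoid SB3Gen)
    (hab : SB3Rel a b) :
    FreeMonoid.lift (burauMatrix t u y) a = FreeMonoid.lift (burauMatrix t u y) b := by
  cases hab <;> ext i j <;> fin_cases i <;> fin_cases j <;>
    simp [burauMatrix, Matrix.mul_apply, Fin.sum_univ_two] <;> grind

end BurauMatrices

lemma Rt_mul_Rtinv : Rt * Rtinv = 1 := by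
  rw [← Polynomial.C_mul, ← LaurentPolynomial.T_add]
  simp

/-- the six Burau matrices satisfy the defining relations of `SB3`,
i.e. there is a unique monoid homomorphism `β_s : SB3 →* M₂(R)` with the
prescribed values on the generators. -/
theorem exists_unique_singularBurau :
    ∃! φ : SB3 →* Matrix (Fin 2) (Fin 2) RR, IsSingularBurau φ := by
  refine ⟨PresentedMonoid.lift (burauMatrix Rt Rtinv Ry)
    (burauMatrix_rel Ry Rt_mul_Rtinv), ?_, ?_⟩
  · unfold IsSingularBurau
    rw [burauTau2_eq Ry Rt_mul_Rtinv]
    exact ⟨rfl, rfl, rfl, rfl, rfl, rfl⟩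
  · intro φ hφ
    unfold IsSingularBurau at hφ
    rw [burauTau2_eq Ry Rt_mul_Rtinv] at hφ
    obtain ⟨h1, h2, h3, h4, h5, h6⟩ := hφ
    apply PresentedMonoid.ext
    rintro (_ | _ | _ | _ | _ | _)
    exacts [h1, h2, h4, h5, h3, h6]
end

section
/- (Consequence of Cohn's theorem.) Let d be a squarefree positive integer with d ≡ 1 or 2 (mod 4) and d ≥ 5, and let ω = √(−d) in the ring O_d = ℤ[√(−d)]. Then the group homomorphism from the presented group ⟨A, B, C | B² = 1, (AB)³ = 1, AC = CA⟩ to PSL₂(O_d) determined by A ↦ [[1,1],[0,1]], B ↦ [[0,−1],[1,0]], C ↦ [[1,ω],[0,1]] (all taken modulo the center) is injective, and its image is the subgroup PE₂(O_d) of PSL₂(O_d) generated by the classes of all matrices [[1,x],[0,1]] and [[1,0],[y,1]] with x, y ∈ O_d. -/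
/-!
The ring `O_d` with `d ≥ 5` is discretely normed: every `x ∈ O_d` other than `0, 1, -1` has complex
absolute value at least `2`. This is all that the argument uses about `O_d`.

Write `T(m + nω) = A^m C^n` in the presented group; `T` is additive because `A` and `C` commute.
The relations give `B² = 1` and `B T(±1) B = T(∓1) B T(∓1)`, so a word `T(x₀) B T(x₁) B ⋯ B T(xᵣ)`
gets shorter whenever an interior exponent is `0` or `±1`. Hence every element has such an
expression whose interior exponents all have absolute value at least `2`
(`cohnNormal_all`).

If `r ≥ 1`, the matrix of `B T(x₁) B ⋯ B T(xᵣ)` has first column `(p, q)` with `|p| < |q|`: this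
holds for `B T(xᵣ)`, and left multiplication by `B T(x)` sends `(p, q)` to `(-q, p + xq)`, where
`|p + xq| ≥ 2|q| - |p| > |q|`. So the lower left entry is nonzero, it remains so after multiplying
by `T(x₀)`, and the matrix is not central. If `r = 0` the matrix is `[[1, x₀], [0, 1]]`, which is
central only for `x₀ = 0`. Hence the kernel is trivial. The image is computed
from `B = U(-1) L(1) U(-1)` and `L(y) = B U(-y) B⁻¹`, with `U`, `L` the elementary matrices.
-/

/-- Generators `A`, `B`, `C` of the presented group in Cohn's theorem. -/
inductive CohnGen : Type
  | A | B | C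

open FreeGroup in
/-- Relators `B² = 1`, `(AB)³ = 1`, `AC = CA`. -/
def cohnRels : Set (FreeGroup CohnGen) :=
  {of .B ^ 2, (of .A * of .B) ^ 3, of .A * of .C * (of .C * of .A)⁻¹}

/-- The ring of imaginary quadratic integers `O_d = ℤ[√-d]`. -/
abbrev Od (d : ℕ) : Type := Zsqrtd (-(d : ℤ))
/-- `SL₂(O_d)`. -/
abbrev SL2Od (d : ℕ) : Type := Matrix.SpecialLinearGroup (Fin 2) (Od d)
/-- `PSL₂(O_d)`, the quotient of `SL₂(O_d)` by its center. -/
abbrev PSLOd (d : ℕ) : Type := SL2Od d ⧸ Subgroup.center (SL2Od d)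

/-- The elementary matrix `[[1,x],[0,1]]` in `SL₂(O_d)`. -/
def elemU (d : ℕ) (x : Od d) : SL2Od d :=
  ⟨!![1, x; 0, 1], by simp [Matrix.det_fin_two_of]⟩
/-- The elementary matrix `[[1,0],[y,1]]` in `SL₂(O_d)`. -/
def elemL (d : ℕ) (y : Od d) : SL2Od d :=
  ⟨!![1, 0; y, 1], by simp [Matrix.det_fin_two_of]⟩
/-- The matrix `B = [[0,-1],[1,0]]` in `SL₂(O_d)`. -/
def matB (d : ℕ) : SL2Od d :=
  ⟨!![0, -1; 1, 0], by simp [Matrix.det_fin_two_of]⟩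

/-- The subgroup `PE₂(O_d)` of `PSL₂(O_d)` generated by the classes of all
elementary matrices `[[1,x],[0,1]]` and `[[1,0],[y,1]]` with `x, y ∈ O_d`. -/
def PE2 (d : ℕ) : Subgroup (PSLOd d) :=
  Subgroup.closure
    ({q : PSLOd d | ∃ x : Od d, q = QuotientGroup.mk (elemU d x)} ∪
     {q : PSLOd d | ∃ y : Od d, q = QuotientGroup.mk (elemL d y)})

/-! ### The absolute value on `O_d` -/

/-- The embedding `O_d → ℂ` sending `√-d` to `i√d`. -/
noncomputable def odToComplex (d : ℕ) : Od d →+* ℂ :=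
  Zsqrtd.lift ⟨Complex.I * (Real.sqrt d : ℝ), by
    have h : ((Real.sqrt d : ℝ) : ℂ) * ((Real.sqrt d : ℝ) : ℂ) = (d : ℂ) := by
      rw [← Complex.ofReal_mul, Real.mul_self_sqrt (Nat.cast_nonneg d)]
      simp
    push_cast
    linear_combination (Real.sqrt d : ℂ) * (Real.sqrt d : ℂ) * Complex.I_mul_I - h⟩

/-- The complex absolute value on `O_d`. -/
noncomputable def odAbs (d : ℕ) (x : Od d) : ℝ := ‖odToComplex d x‖

lemma odAbs_sq (d : ℕ) (x : Od d) : odAbs d x ^ 2 = (x.re : ℝ) ^ 2 + d * (x.im : ℝ) ^ 2 := by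
  have h := Real.mul_self_sqrt (Nat.cast_nonneg (α := ℝ) d)
  rw [odAbs, ← Complex.normSq_eq_norm_sq, Complex.normSq_apply]
  simp [odToComplex]
  linear_combination (x.im : ℝ) ^ 2 * h

/-- `O_d` is discretely normed: all elements but `0` and `±1` have absolute value at least `2`. -/
lemma odAbs_trichotomy (d : ℕ) (hd : 5 ≤ d) (x : Od d) :
    2 ≤ odAbs d x ∨ x = 0 ∨ x = 1 ∨ x = -1 := by
  by_cases h : 4 ≤ x.re ^ 2 + d * x.im ^ 2
  · left
    have hentry : (2 : ℝ) ^ 2 ≤ odAbs d x ^ 2 := by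
      rw [odAbs_sq]
      norm_num
      exact_mod_cast h
    exact le_of_sq_le_sq hentry (norm_nonneg _)
  · right
    have hd' : (5 : ℤ) ≤ d := by exact_mod_cast hd
    have him : x.im = 0 := by
      by_contra hne
      have : 0 < x.im ^ 2 := by positivity
      nlinarith [sq_nonneg x.re]
    have h1 : x.re < 2 := by rw [him] at h; nlinarith
    have h2 : -2 < x.re := by rw [him] at h; nlinarith
    obtain h | h | h : x.re = 0 ∨ x.re = 1 ∨ x.re = -1 := by omega
    · left; ext <;> simp [h, him]
    · right; left; ext <;> simp [h, him]
    · right; right; ext <;> simp [h, him]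

lemma odAbs_growth (d : ℕ) (p q x : Od d) (hx : 2 ≤ odAbs d x) (h : odAbs d p < odAbs d q) :
    odAbs d (-q) < odAbs d (p + x * q) := by
  unfold odAbs at *
  rw [map_neg, norm_neg, map_add, map_mul]
  have h1 := norm_sub_le (odToComplex d p + odToComplex d x * odToComplex d q) (odToComplex d p)
  rw [add_sub_cancel_left, norm_mul] at h1
  nlinarith [norm_nonneg (odToComplex d q)]

/-! ### Normal forms in the presented group -/

/-- The generator `A` of the presented group. -/
def genA : PresentedGroup cohnRels := PresentedGroup.of .A
/-- The generator `B` of the presented group. -/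
def genB : PresentedGroup cohnRels := PresentedGroup.of .B
/-- The generator `C` of the presented group. -/
def genC : PresentedGroup cohnRels := PresentedGroup.of .C

lemma genB_mul_self : genB * genB = 1 := by
  have h : PresentedGroup.mk cohnRels (FreeGroup.of .B ^ 2) = 1 :=
    PresentedGroup.one_of_mem (by simp [cohnRels])
  rwa [map_pow, pow_two] at h

lemma genAB_cube : (genA * genB) ^ 3 = 1 := by
  have h : PresentedGroup.mk cohnRels ((FreeGroup.of .A * FreeGroup.of .B) ^ 3) = 1 :=
    PresentedGroup.one_of_mem (by simp [cohnRels])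
  rwa [map_pow, map_mul] at h

lemma genA_comm_genC : Commute genA genC := by
  have h : PresentedGroup.mk cohnRels
      (FreeGroup.of .A * FreeGroup.of .C * (FreeGroup.of .C * FreeGroup.of .A)⁻¹) = 1 :=
    PresentedGroup.one_of_mem (by simp [cohnRels])
  rw [map_mul, map_inv, mul_inv_eq_one, map_mul, map_mul] at h
  exact h

/-- The lift `T(m + nω) = A^m C^n` of the translation `[[1, m + nω], [0, 1]]`. -/
def genT (d : ℕ) (x : Od d) : PresentedGroup cohnRels := genA ^ x.re * genC ^ x.im

lemma genT_add (d : ℕ) (x y : Od d) : genT d (x + y) = genT d x * genT d y := by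
  have h : genA ^ y.re * genC ^ x.im = genC ^ x.im * genA ^ y.re :=
    (genA_comm_genC.zpow_zpow _ _).eq
  simp only [genT, Zsqrtd.re_add, Zsqrtd.im_add, zpow_add]
  rw [mul_assoc, mul_assoc, ← mul_assoc (genA ^ y.re), h, mul_assoc]

lemma genT_zero (d : ℕ) : genT d 0 = 1 := by simp [genT]

lemma genT_one (d : ℕ) : genT d 1 = genA := by simp [genT]

lemma genT_neg (d : ℕ) (x : Od d) : genT d (-x) = (genT d x)⁻¹ := by
  rw [eq_inv_iff_mul_eq_one, ← genT_add, neg_add_cancel, genT_zero]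

lemma genT_sqrtd (d : ℕ) : genT d Zsqrtd.sqrtd = genC := by simp [genT]

lemma genB_inv : genB⁻¹ = genB := inv_eq_of_mul_eq_one_right genB_mul_self

lemma genBTB_one (d : ℕ) : genB * genT d 1 * genB = genT d (-1) * genB * genT d (-1) := by
  have h := genAB_cube
  rw [genT_neg, genT_one]
  rw [pow_succ, pow_two, mul_eq_one_iff_eq_inv, mul_inv_rev, genB_inv] at h
  calc genB * genA * genB = genA⁻¹ * (genA * genB * (genA * genB)) := by group
    _ = genA⁻¹ * genB * genA⁻¹ := by rw [h]; group

lemma genBTB_neg_one (d : ℕ) : genB * genT d (-1) * genB = genT d 1 * genB * genT d 1 := by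
  have h := congrArg (·⁻¹) (genBTB_one d)
  simp only [mul_inv_rev, genB_inv, ← genT_neg, neg_neg] at h
  simpa only [mul_assoc] using h

/-- The products `B T(x₁) B T(x₂) ⋯ B T(xᵣ)` with `r ≥ 1`, in which every exponent except
possibly the last has absolute value at least `2`. -/
inductive CohnReduced (d : ℕ) : PresentedGroup cohnRels → Prop
  | base (y : Od d) : CohnReduced d (genB * genT d y)
  | step (x : Od d) (g : PresentedGroup cohnRels) (hx : 2 ≤ odAbs d x) (hg : CohnReduced d g) :
      CohnReduced d (genB * genT d x * g)

/-- Elements with a normal form: `T(x)`, or `T(x)` times a reduced product. -/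
def CohnNormal (d : ℕ) (g : PresentedGroup cohnRels) : Prop :=
  (∃ x, g = genT d x) ∨ ∃ x h, CohnReduced d h ∧ g = genT d x * h

lemma CohnReduced.normal {d : ℕ} {g : PresentedGroup cohnRels} (h : CohnReduced d g) :
    CohnNormal d g :=
  Or.inr ⟨0, g, h, by rw [genT_zero, one_mul]⟩

lemma CohnNormal.genT_mul {d : ℕ} {g : PresentedGroup cohnRels} (h : CohnNormal d g) (z : Od d) :
    CohnNormal d (genT d z * g) := by
  rcases h with ⟨x, rfl⟩ | ⟨x, h, hh, rfl⟩
  · exact Or.inl ⟨z + x, (genT_add _ _ _).symm⟩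
  · exact Or.inr ⟨z + x, h, hh, by rw [genT_add, mul_assoc]⟩

lemma CohnReduced.genB_mul {d : ℕ} {h : PresentedGroup cohnRels} (hh : CohnReduced d h) :
    CohnNormal d (genB * h) := by
  cases hh with
  | base y => exact Or.inl ⟨y, by rw [← mul_assoc, genB_mul_self, one_mul]⟩
  | step x g hx hg =>
    exact Or.inr ⟨x, g, hg, by rw [← mul_assoc, ← mul_assoc, genB_mul_self, one_mul]⟩

/-- Prefixing `B T(x)` to a reduced product. The induction is needed for `x = ±1`: the rewriting
`B T(±1) B = T(∓1) B T(∓1)` shifts the next exponent, which may in turn become `0` or `±1`. -/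
lemma CohnReduced.genB_genT_mul {d : ℕ} (hd : 5 ≤ d) {h : PresentedGroup cohnRels}
    (hh : CohnReduced d h) : ∀ x : Od d, CohnNormal d (genB * genT d x * h) := by
  have key (u v : Od d) (huv : genB * genT d u * genB = genT d v * genB * genT d v)
      (z : Od d) : genB * genT d u * (genB * genT d z)
        = genT d v * (genB * genT d (v + z)) := by
    rw [genT_add, ← mul_assoc, huv]
    simp only [mul_assoc]
  induction hh with
  | base y =>
    intro x
    rcases odAbs_trichotomy d hd x with hx | rfl | rfl | rfl
    · exact (CohnReduced.step x _ hx (.base y)).normal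
    · rw [genT_zero, mul_one]
      exact (CohnReduced.base y).genB_mul
    · rw [key _ _ (genBTB_one d)]
      exact (CohnReduced.base _).normal.genT_mul _
    · rw [key _ _ (genBTB_neg_one d)]
      exact (CohnReduced.base _).normal.genT_mul _
  | step z g hz hg ih =>
    intro x
    rcases odAbs_trichotomy d hd x with hx | rfl | rfl | rfl
    · exact (CohnReduced.step x _ hx (.step z g hz hg)).normal
    · rw [genT_zero, mul_one]
      exact (CohnReduced.step z g hz hg).genB_mul
    · rw [← mul_assoc, key _ _ (genBTB_one d), mul_assoc]
      exact (ih _).genT_mul _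
    · rw [← mul_assoc, key _ _ (genBTB_neg_one d), mul_assoc]
      exact (ih _).genT_mul _

lemma CohnNormal.genB_mul {d : ℕ} (hd : 5 ≤ d) {g : PresentedGroup cohnRels}
    (h : CohnNormal d g) : CohnNormal d (genB * g) := by
  rcases h with ⟨x, rfl⟩ | ⟨x, h, hh, rfl⟩
  · exact (CohnReduced.base x).normal
  · rw [← mul_assoc]
    exact hh.genB_genT_mul hd x

lemma cohnNormal_all {d : ℕ} (hd : 5 ≤ d) (g : PresentedGroup cohnRels) : CohnNormal d g := by
  have hg : g ∈ Subgroup.closure (Set.range (PresentedGroup.of (rels := cohnRels))) := by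
    rw [PresentedGroup.closure_range_of]
    trivial
  induction hg using Subgroup.closure_induction_left with
  | one => exact Or.inl ⟨0, (genT_zero d).symm⟩
  | mul_left x hx y hy ih =>
    obtain ⟨c, rfl⟩ := hx
    cases c with
    | A =>
      have := ih.genT_mul 1
      rwa [genT_one] at this
    | B => exact ih.genB_mul hd
    | C =>
      have := ih.genT_mul Zsqrtd.sqrtd
      rwa [genT_sqrtd] at this
  | inv_mul_cancel x hx y hy ih =>
    obtain ⟨c, rfl⟩ := hx
    cases c with
    | A =>
      have := ih.genT_mul (-1)
      rwa [genT_neg, genT_one] at this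
    | B =>
      have := ih.genB_mul hd
      rwa [← genB_inv] at this
    | C =>
      have := ih.genT_mul (-Zsqrtd.sqrtd)
      rwa [genT_neg, genT_sqrtd] at this

/-! ### Matrices -/

lemma coe_elemU (d : ℕ) (x : Od d) :
    (elemU d x : Matrix (Fin 2) (Fin 2) (Od d)) = !![1, x; 0, 1] := rfl

lemma coe_elemL (d : ℕ) (y : Od d) :
    (elemL d y : Matrix (Fin 2) (Fin 2) (Od d)) = !![1, 0; y, 1] := rfl

lemma coe_matB (d : ℕ) : (matB d : Matrix (Fin 2) (Fin 2) (Od d)) = !![0, -1; 1, 0] := rfl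

lemma elemU_add (d : ℕ) (x y : Od d) : elemU d (x + y) = elemU d x * elemU d y := by
  apply Subtype.ext
  simp [coe_elemU, add_comm]

/-- The one-parameter group `x ↦ [[1,x],[0,1]]` as a homomorphism. -/
def elemUHom (d : ℕ) : Multiplicative (Od d) →* SL2Od d :=
  MonoidHom.mk' (fun x => elemU d x.toAdd) fun x y => elemU_add d x.toAdd y.toAdd

lemma elemU_zpow (d : ℕ) (x : Od d) (n : ℤ) : elemU d x ^ n = elemU d (n • x) :=
  (map_zpow (elemUHom d) (Multiplicative.ofAdd x) n).symm

lemma elemL_eq (d : ℕ) (y : Od d) : elemL d y = matB d * elemU d (-y) * (matB d)⁻¹ := by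
  rw [eq_mul_inv_iff_mul_eq]
  apply Subtype.ext
  simp [coe_elemU, coe_elemL, coe_matB]

lemma matB_eq (d : ℕ) : matB d = elemU d (-1) * elemL d 1 * elemU d (-1) := by
  apply Subtype.ext
  simp [coe_elemU, coe_elemL, coe_matB]

lemma lower_left_eq_zero_of_center {d : ℕ} {M : SL2Od d}
    (hM : M ∈ Subgroup.center (SL2Od d)) : M 1 0 = 0 := by
  have h := Subgroup.mem_center_iff.1 hM (elemU d 1)
  have hentry := congrArg (fun N : SL2Od d => N 0 0) h
  simpa [coe_elemU, Matrix.mul_apply, Fin.sum_univ_two] using hentry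

lemma eq_zero_of_elemU_center {d : ℕ} {x : Od d}
    (hM : elemU d x ∈ Subgroup.center (SL2Od d)) : x = 0 := by
  have h := Subgroup.mem_center_iff.1 hM (matB d)
  have hentry := congrArg (fun N : SL2Od d => N 1 1) h
  simpa [coe_elemU, coe_matB, Matrix.mul_apply, Fin.sum_univ_two] using hentry

/-- A reduced product is represented by a matrix whose first column grows downwards. -/
lemma CohnReduced.exists_matrix {d : ℕ} (φ : PresentedGroup cohnRels →* PSLOd d)
    (hT : ∀ x, φ (genT d x) = QuotientGroup.mk (elemU d x))
    (hB : φ genB = QuotientGroup.mk (matB d)) {g : PresentedGroup cohnRels}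
    (hg : CohnReduced d g) :
    ∃ M : SL2Od d, φ g = QuotientGroup.mk M ∧ odAbs d (M 0 0) < odAbs d (M 1 0) := by
  induction hg with
  | base y =>
    refine ⟨matB d * elemU d y, by rw [map_mul, hB, hT]; rfl, ?_⟩
    simp [coe_elemU, coe_matB, Matrix.mul_apply, Fin.sum_univ_two, odAbs]
  | step x g hx hg ih =>
    obtain ⟨M, hM, hlt⟩ := ih
    refine ⟨matB d * elemU d x * M, by rw [map_mul, map_mul, hB, hT, hM]; rfl, ?_⟩
    have := odAbs_growth d _ _ x hx hlt
    simpa [coe_elemU, coe_matB, Matrix.mul_apply, Fin.sum_univ_two] using this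

/-- consequence of Cohn's theorem: for squarefree `d ≥ 5` with
`d ≡ 1, 2 (mod 4)`, the homomorphism `⟨A,B,C | B² = (AB)³ = [A,C] = 1⟩ →
PSL₂(O_d)` with `A ↦ [[1,1],[0,1]]`, `B ↦ [[0,-1],[1,0]]`, `C ↦ [[1,ω],[0,1]]`
(`ω = √-d`) is injective with image `PE₂(O_d)`. -/
theorem cohn_presentation (d : ℕ) (hsf : Squarefree d)
    (hmod : d % 4 = 1 ∨ d % 4 = 2) (hd : 5 ≤ d)
    (φ : PresentedGroup cohnRels →* PSLOd d)
    (hA : φ (PresentedGroup.of .A) = QuotientGroup.mk (elemU d 1))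
    (hB : φ (PresentedGroup.of .B) = QuotientGroup.mk (matB d))
    (hC : φ (PresentedGroup.of .C) = QuotientGroup.mk (elemU d Zsqrtd.sqrtd)) :
    Function.Injective φ ∧ MonoidHom.range φ = PE2 d := by
  have hT (x : Od d) : φ (genT d x) = QuotientGroup.mk (elemU d x) := by
    have hx : x = x.re • (1 : Od d) + x.im • (Zsqrtd.sqrtd : Od d) := by
      ext <;> simp
    have hU : elemU d x = elemU d 1 ^ x.re * elemU d Zsqrtd.sqrtd ^ x.im := by
      rw [elemU_zpow, elemU_zpow, ← elemU_add, ← hx]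
    rw [hU, genT, map_mul, map_zpow, map_zpow, genA, genC, hA, hC]
    rfl
  constructor
  · rw [injective_iff_map_eq_one]
    intro g hg
    rcases cohnNormal_all hd g with ⟨x, rfl⟩ | ⟨x, h, hh, rfl⟩
    · rw [hT, QuotientGroup.eq_one_iff] at hg
      rw [eq_zero_of_elemU_center hg, genT_zero]
    · exfalso
      obtain ⟨M, hM, hlt⟩ := hh.exists_matrix φ hT hB
      rw [map_mul, hT, hM, ← QuotientGroup.mk_mul, QuotientGroup.eq_one_iff] at hg
      have h0 := lower_left_eq_zero_of_center hg
      have h1 : M 1 0 = 0 := by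
        simpa [coe_elemU, Matrix.mul_apply, Fin.sum_univ_two] using h0
      rw [h1] at hlt
      simp only [odAbs, map_zero, norm_zero] at hlt
      exact absurd hlt (not_lt.2 (norm_nonneg _))
  · have hUmem (x : Od d) : (QuotientGroup.mk (elemU d x) : PSLOd d) ∈ PE2 d :=
      Subgroup.subset_closure (Or.inl ⟨x, rfl⟩)
    have hLmem (y : Od d) : (QuotientGroup.mk (elemL d y) : PSLOd d) ∈ PE2 d :=
      Subgroup.subset_closure (Or.inr ⟨y, rfl⟩)
    apply le_antisymm
    · rw [MonoidHom.range_eq_map, ← PresentedGroup.closure_range_of, MonoidHom.map_closure,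
        Subgroup.closure_le]
      rintro _ ⟨_, ⟨c, rfl⟩, rfl⟩
      cases c with
      | A => rw [hA]; exact hUmem 1
      | B =>
        rw [hB, matB_eq]
        exact mul_mem (mul_mem (hUmem _) (hLmem _)) (hUmem _)
      | C => rw [hC]; exact hUmem _
    · rw [PE2, Subgroup.closure_le]
      rintro q (⟨x, rfl⟩ | ⟨y, rfl⟩)
      · exact ⟨genT d x, hT x⟩
      · refine ⟨genB * genT d (-y) * genB⁻¹, ?_⟩
        rw [map_mul, map_mul, map_inv, hT, genB, hB, elemL_eq]
        rfl
end

section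
/- The singular Burau representation β_s : SB_3 → M₂(R) is faithful: for all a, b ∈ SB_3, if β_s(a) = β_s(b) then a = b. -/
namespace SB3

/-! ### The braid group on three strands, modulo the stabiliser of a cusp -/

/-- The submonoid generated by `a` and `b⁻¹`, as an inductive predicate. -/
inductive Pos {G : Type*} [Group G] (a b : G) : G → Prop
  | one : Pos a b 1
  | consA (p : G) : Pos a b p → Pos a b (a * p)
  | consB (p : G) : Pos a b p → Pos a b (b⁻¹ * p)

/-- The full twist `Δ²`, where `Δ = a b a`. -/
def fullTwist {G : Type*} [Group G] (a b : G) : G := (a * b * a) * (a * b * a)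

/-- `g` has the form `p h` with `p` in the submonoid generated by `a, b⁻¹` and `h = aᵐ Δ²ⁿ`. -/
def InPH {G : Type*} [Group G] (a b g : G) : Prop :=
  ∃ p, Pos a b p ∧ ∃ m n : ℤ, g = p * (a ^ m * fullTwist a b ^ n)

/-- `g` has the form `p h` or `Δ p h`, with `p` and `h` as in `InPH`. -/
def InS {G : Type*} [Group G] (a b g : G) : Prop :=
  InPH a b g ∨ ∃ k, InPH a b k ∧ g = a * b * a * k

section Group

variable {G : Type*} [Group G] {a b : G}

theorem delta_a (h : a * b * a = b * a * b) : a * b * a * a = b * (a * b * a) := by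
  conv_lhs => rw [h]
  simp only [mul_assoc]

theorem delta_b (h : a * b * a = b * a * b) : a * b * a * b = a * (a * b * a) := by
  conv_rhs => rw [h]
  simp only [mul_assoc]

theorem twist_comm_a (h : a * b * a = b * a * b) : Commute (fullTwist a b) a := by
  unfold Commute SemiconjBy fullTwist
  rw [mul_assoc, delta_a h, ← mul_assoc, delta_b h, mul_assoc]

theorem twist_comm_b (h : a * b * a = b * a * b) : Commute (fullTwist a b) b := by
  unfold Commute SemiconjBy fullTwist
  rw [mul_assoc, delta_b h, ← mul_assoc, delta_a h, mul_assoc]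

theorem twist_comm_pos (h : a * b * a = b * a * b) {p : G} (hp : Pos a b p) :
    Commute (fullTwist a b) p := by
  induction hp with
  | one => exact Commute.one_right _
  | consA p _ ih => exact (twist_comm_a h).mul_right ih
  | consB p _ ih => exact (twist_comm_b h).inv_right.mul_right ih

theorem InPH.consA {g : G} : InPH a b g → InPH a b (a * g) := by
  rintro ⟨p, hp, m, n, rfl⟩
  exact ⟨_, hp.consA, m, n, by simp only [mul_assoc]⟩

theorem InPH.consB {g : G} : InPH a b g → InPH a b (b⁻¹ * g) := by
  rintro ⟨p, hp, m, n, rfl⟩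
  exact ⟨_, hp.consB, m, n, by simp only [mul_assoc]⟩

theorem InPH.twist (h : a * b * a = b * a * b) (k : ℤ) {g : G} :
    InPH a b g → InPH a b (fullTwist a b ^ k * g) := by
  rintro ⟨p, hp, m, n, rfl⟩
  refine ⟨p, hp, m, k + n, ?_⟩
  have h1 := ((twist_comm_pos h hp).zpow_left k).eq
  have h2 := ((twist_comm_a h).zpow_zpow k m).eq
  rw [← mul_assoc, h1, mul_assoc, ← mul_assoc _ (a ^ m), h2, mul_assoc, zpow_add]

theorem InS.delta (h : a * b * a = b * a * b) {g : G} :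
    InS a b g → InS a b (a * b * a * g) := by
  rintro (hg | ⟨k, hk, rfl⟩)
  · exact Or.inr ⟨_, hg, rfl⟩
  · refine Or.inl ?_
    have := hk.twist h 1
    rwa [zpow_one, fullTwist, mul_assoc] at this

theorem inPH_zpow (m n : ℤ) : InPH a b (a ^ m * fullTwist a b ^ n) :=
  ⟨1, .one, m, n, by simp⟩

/-- Uses `b a = Δ b⁻¹` to restore positivity. -/
theorem InPH.b_mul (h : a * b * a = b * a * b) {g : G} : InPH a b g → InS a b (b * g) := by
  have hba : b * a = a * b * a * b⁻¹ := by rw [h]; group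
  rintro ⟨p, hp, m, n, rfl⟩
  cases hp with
  | one =>
    refine Or.inr ⟨b⁻¹ * (a ^ (m - 1) * fullTwist a b ^ n), (inPH_zpow _ _).consB, ?_⟩
    rw [← mul_assoc (a * b * a), ← hba, zpow_sub_one, one_mul]
    rw [(((Commute.refl a).zpow_left m).inv_right).eq]
    group
  | consA p hp =>
    refine Or.inr ⟨b⁻¹ * (p * (a ^ m * fullTwist a b ^ n)), InPH.consB ⟨p, hp, m, n, rfl⟩, ?_⟩
    rw [← mul_assoc (a * b * a), ← hba]; simp only [mul_assoc]
  | consB p hp => exact Or.inl ⟨p, hp, m, n, by group⟩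

/-- Uses `a⁻¹ b⁻¹ = Δ · Δ⁻² · a` to restore positivity. -/
theorem InPH.a_inv_mul (h : a * b * a = b * a * b) {g : G} :
    InPH a b g → InS a b (a⁻¹ * g) := by
  rintro ⟨p, hp, m, n, rfl⟩
  cases hp with
  | one =>
    refine Or.inl ?_
    have := inPH_zpow (a := a) (b := b) (m - 1) n
    rw [zpow_sub_one, (((Commute.refl a).zpow_left m).inv_right).eq, mul_assoc] at this
    rwa [one_mul]
  | consA p hp => exact Or.inl ⟨p, hp, m, n, by group⟩
  | consB p hp =>
    refine Or.inr ⟨fullTwist a b ^ (-1 : ℤ) * (a * (p * (a ^ m * fullTwist a b ^ n))),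
      (InPH.consA ⟨p, hp, m, n, rfl⟩).twist h _, ?_⟩
    simp only [fullTwist, zpow_neg_one, mul_inv_rev, mul_assoc, mul_inv_cancel_left,
      inv_mul_cancel_left]

/-- Every braid is `p h` or `Δ p h`. -/
theorem inS_of_mem_closure (h : a * b * a = b * a * b) {g : G}
    (hg : g ∈ Subgroup.closure {a, b}) : InS a b g := by
  have ha' : ∀ k, a⁻¹ * (a * b * a * k) = a * b * a * (b⁻¹ * k) := fun k => by
    rw [inv_mul_eq_iff_eq_mul, ← mul_assoc a, ← delta_b h]; group
  have hb' : ∀ k, b⁻¹ * (a * b * a * k) = a * b * a * (a⁻¹ * k) := fun k => by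
    rw [inv_mul_eq_iff_eq_mul, ← mul_assoc b, ← delta_a h]; group
  induction hg using Subgroup.closure_induction_left with
  | one => exact Or.inl ⟨1, .one, 0, 0, by simp⟩
  | mul_left x hx y _ ih =>
    rcases hx with rfl | rfl
    · rcases ih with hy | ⟨k, hk, rfl⟩
      · exact Or.inl hy.consA
      · rw [← mul_assoc, ← delta_b h, mul_assoc]
        exact (hk.b_mul h).delta h
    · rcases ih with hy | ⟨k, hk, rfl⟩
      · exact hy.b_mul h
      · rw [← mul_assoc, ← delta_a h, mul_assoc]
        exact Or.inr ⟨_, hk.consA, rfl⟩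
  | inv_mul_cancel x hx y _ ih =>
    rcases hx with rfl | rfl
    · rcases ih with hy | ⟨k, hk, rfl⟩
      · exact hy.a_inv_mul h
      · rw [ha']
        exact Or.inr ⟨_, hk.consB, rfl⟩
    · rcases ih with hy | ⟨k, hk, rfl⟩
      · exact Or.inl hy.consB
      · rw [hb']
        exact (hk.a_inv_mul h).delta h

end Group

/-! ### Units and conjugates of the singular generator in `SB3` -/

theorem rel {x y : FreeMonoid SB3Gen} (h : SB3Rel x y) :
    PresentedMonoid.mk SB3Rel x = PresentedMonoid.mk SB3Rel y :=
  PresentedMonoid.mk_eq_mk_of_rel h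

/-- `σ₁` as a unit. -/
def ua : SB3ˣ where
  val := g .s1
  inv := g .sb1
  inv_val := rel .inv_s1'
  val_inv := rel .inv_s1

/-- `σ₂` as a unit. -/
def ub : SB3ˣ where
  val := g .s2
  inv := g .sb2
  inv_val := rel .inv_s2'
  val_inv := rel .inv_s2

theorem braid : ua * ub * ua = ub * ua * ub := Units.ext (rel .braid)

/-- The subgroup of units generated by `σ₁` and `σ₂`. -/
abbrev B : Subgroup SB3ˣ := Subgroup.closure {ua, ub}

/-- `Δ²`. -/
abbrev z : SB3ˣ := fullTwist ua ub

/-- The conjugate `u τ₁ u⁻¹`. -/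
def tau (u : B) : SB3 := (u : SB3ˣ) * g .t1 * ((u : SB3ˣ)⁻¹ : SB3ˣ)

theorem ua_comm : (ua : SB3) * g .t1 = g .t1 * ua := rel .comm1

theorem tau_two : g .t2 * ((ua * ub : SB3ˣ) : SB3) = (ua * ub : SB3ˣ) * g .t1 := by
  have : g .t2 * g .s1 * g .s2 = g .s1 * g .s2 * g .t1 := rel .tau_s
  rwa [mul_assoc] at this

theorem tau_two' : ((ub * ua : SB3ˣ) : SB3) * g .t2 = g .t1 * (ub * ua : SB3ˣ) := by
  have : g .s2 * g .s1 * g .t2 = g .t1 * g .s2 * g .s1 := rel .s_tau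
  rwa [mul_assoc (g .t1)] at this

/-- `Δ² = σ₁ (σ₂σ₁) (σ₁σ₂) σ₁`, and `τ₁` passes through each factor (turning into `τ₂` between
the two middle ones). -/
theorem z_comm : (z : SB3) * g .t1 = g .t1 * z := by
  have e : z = ua * (ub * ua) * (ua * ub) * ua := by simp only [z, fullTwist, mul_assoc]
  rw [e, Units.val_mul _ ua, mul_assoc, ua_comm, Units.val_mul _ (ua * ub), Units.val_mul ua]
  calc (ua : SB3) * ↑(ub * ua) * ↑(ua * ub) * (g .t1 * ↑ua)
      = ua * (↑(ub * ua) * (↑(ua * ub) * g .t1)) * ↑ua := by simp only [mul_assoc]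
    _ = ua * (↑(ub * ua) * g .t2) * ↑(ua * ub) * ↑ua := by rw [← tau_two]; simp only [mul_assoc]
    _ = (ua * g .t1) * ↑(ub * ua) * ↑(ua * ub) * ↑ua := by rw [tau_two']; simp only [mul_assoc]
    _ = _ := by rw [ua_comm]; simp only [mul_assoc]

theorem zpow_comm (m n : ℤ) :
    ((ua ^ m * z ^ n : SB3ˣ) : SB3) * g .t1 = g .t1 * (ua ^ m * z ^ n : SB3ˣ) := by
  have h1 : Commute (g .t1) (ua : SB3) := ua_comm.symm
  have h2 : Commute (g .t1) (z : SB3) := z_comm.symm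
  have := (h1.units_zpow_right m).mul_right (h2.units_zpow_right n)
  exact this.symm.eq

/-- `u τ₁ u⁻¹` depends only on the coset of `u` modulo `⟨σ₁, Δ²⟩`. -/
theorem tau_eq {u v : B} {m n : ℤ} (h : ((v⁻¹ * u : B) : SB3ˣ) = ua ^ m * z ^ n) :
    tau u = tau v := by
  have e : (u : SB3ˣ) = v * (ua ^ m * z ^ n) := by rw [← h]; simp
  unfold tau
  rw [e, Units.val_mul, mul_assoc ((v : SB3ˣ) : SB3), zpow_comm, mul_inv_rev, Units.val_mul (_)⁻¹]
  simp only [mul_assoc, Units.mul_inv_cancel_left]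

theorem unit_mul_tau_prod (v : B) (L : List B) :
    ((v : SB3ˣ) : SB3) * (L.map tau).prod = ((L.map (v * ·)).map tau).prod * (v : SB3ˣ) := by
  induction L with
  | nil => simp
  | cons u L ih =>
    simp only [List.map_cons, List.prod_cons]
    rw [mul_assoc, ← ih]
    simp [tau, mul_assoc]

/-- Every singular braid is a product of conjugates of `τ₁` followed by a braid. -/
theorem exists_normal (x : SB3) : ∃ (L : List B) (v : B), x = (L.map tau).prod * (v : SB3ˣ) := by
  have ha : ua ∈ B := Subgroup.subset_closure (by simp)
  have hb : ub ∈ B := Subgroup.subset_closure (by simp)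
  have hunit : ∀ (w : B) (y : SB3), (∃ (L : List B) (v : B), y = (L.map tau).prod * (v : SB3ˣ)) →
      ∃ (L : List B) (v : B), (w : SB3ˣ) * y = (L.map tau).prod * (v : SB3ˣ) := by
    rintro w y ⟨L, v, rfl⟩
    exact ⟨L.map (w * ·), w * v, by
      rw [← mul_assoc, unit_mul_tau_prod, mul_assoc, Subgroup.coe_mul, Units.val_mul]⟩
  have htau : ∀ (w : B) (y : SB3), (∃ (L : List B) (v : B), y = (L.map tau).prod * (v : SB3ˣ)) →
      ∃ (L : List B) (v : B), tau w * y = (L.map tau).prod * (v : SB3ˣ) := by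
    rintro w y ⟨L, v, rfl⟩
    exact ⟨w :: L, v, by simp [mul_assoc]⟩
  have ht1 : g .t1 = tau 1 := by simp [tau]
  have ht2 : g .t2 = tau ⟨ua * ub, B.mul_mem ha hb⟩ := by
    unfold tau
    rw [← tau_two, mul_assoc, Units.mul_inv, mul_one]
  induction x using PresentedMonoid.inductionOn with
  | _ w =>
  induction w using FreeMonoid.inductionOn' with
  | one => exact ⟨[], 1, by simp⟩
  | of_mul s w ih =>
    rw [map_mul]
    cases s with
    | s1 => exact hunit ⟨ua, ha⟩ _ ih
    | s2 => exact hunit ⟨ub, hb⟩ _ ih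
    | sb1 => exact hunit ⟨ua⁻¹, B.inv_mem ha⟩ _ ih
    | sb2 => exact hunit ⟨ub⁻¹, B.inv_mem hb⟩ _ ih
    | t1 =>
      change ∃ L v, g .t1 * _ = _
      rw [ht1]
      exact htau 1 _ ih
    | t2 =>
      change ∃ L v, g .t2 * _ = _
      rw [ht2]
      exact htau _ _ ih

/-! ### Specialisations of the representation -/

noncomputable section

open LaurentPolynomial

/-- The specialisation `y = 0`: on braids this is the Burau representation. -/
def psi (φ : SB3 →* Matrix (Fin 2) (Fin 2) RR) : SB3 →* Matrix (Fin 2) (Fin 2) ℤ[T;T⁻¹] :=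
  ((Polynomial.evalRingHom (0 : ℤ[T;T⁻¹])).mapMatrix.toMonoidHom).comp φ

/-- The specialisation `y = 0`, `t = -1`: on braids this is the map onto `SL₂(ℤ)`. -/
def rho (φ : SB3 →* Matrix (Fin 2) (Fin 2) RR) : SB3 →* Matrix (Fin 2) (Fin 2) ℤ :=
  ((LaurentPolynomial.eval₂ (RingHom.id ℤ) (-1 : ℤˣ)).mapMatrix.toMonoidHom).comp (psi φ)

variable {φ : SB3 →* Matrix (Fin 2) (Fin 2) RR}

theorem rho_apply (x : SB3) (i j : Fin 2) :
    rho φ x i j = LaurentPolynomial.eval₂ (RingHom.id ℤ) (-1 : ℤˣ) (psi φ x i j) := rfl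

theorem psi_ua (hφ : IsSingularBurau φ) : psi φ ua = !![-T 1, 1; 0, 1] := by
  have : φ ua = _ := hφ.1
  simp only [psi, MonoidHom.comp_apply, this]
  refine Matrix.ext fun i j => ?_
  fin_cases i <;> fin_cases j <;> simp

theorem psi_ub (hφ : IsSingularBurau φ) : psi φ ub = !![1, 0; T 1, -T 1] := by
  have : φ ub = _ := hφ.2.1
  simp only [psi, MonoidHom.comp_apply, this]
  refine Matrix.ext fun i j => ?_
  fin_cases i <;> fin_cases j <;> simp

theorem psi_ua_inv (hφ : IsSingularBurau φ) :
    psi φ (ua⁻¹ : SB3ˣ) = !![-T (-1), T (-1); 0, 1] := by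
  have : φ (ua⁻¹ : SB3ˣ) = _ := hφ.2.2.2.1
  simp only [psi, MonoidHom.comp_apply, this]
  refine Matrix.ext fun i j => ?_
  fin_cases i <;> fin_cases j <;> simp

theorem psi_ub_inv (hφ : IsSingularBurau φ) :
    psi φ (ub⁻¹ : SB3ˣ) = !![1, 0; 1, -T (-1)] := by
  have : φ (ub⁻¹ : SB3ˣ) = _ := hφ.2.2.2.2.1
  simp only [psi, MonoidHom.comp_apply, this]
  refine Matrix.ext fun i j => ?_
  fin_cases i <;> fin_cases j <;> simp

theorem psi_z (hφ : IsSingularBurau φ) : psi φ z = (T 3 : ℤ[T;T⁻¹]) • 1 := by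
  have e : (T 3 : ℤ[T;T⁻¹]) = T 1 * T 1 * T 1 := by rw [← T_add, ← T_add]; norm_num
  simp only [z, fullTwist, Units.val_mul, map_mul, psi_ua hφ, psi_ub hφ, e]
  generalize (T 1 : ℤ[T;T⁻¹]) = t
  refine Matrix.ext fun i j => ?_
  fin_cases i <;> fin_cases j <;> simp [Matrix.mul_apply, Fin.sum_univ_two] <;> ring

theorem psi_mul_inv (u : SB3ˣ) : psi φ u * psi φ (u⁻¹ : SB3ˣ) = 1 := by
  rw [← map_mul, Units.mul_inv, map_one]

theorem psi_inv_mul (u : SB3ˣ) : psi φ (u⁻¹ : SB3ˣ) * psi φ u = 1 := by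
  rw [← map_mul, Units.inv_mul, map_one]

theorem psi_z_inv (hφ : IsSingularBurau φ) :
    psi φ (z⁻¹ : SB3ˣ) = (T (-3) : ℤ[T;T⁻¹]) • 1 := by
  have h := psi_inv_mul (φ := φ) z
  rw [psi_z hφ, mul_smul_comm, mul_one] at h
  rw [← h, smul_smul, ← T_add]
  simp

theorem psi_z_zpow (hφ : IsSingularBurau φ) (n : ℤ) :
    psi φ (z ^ n : SB3ˣ) = (T (3 * n) : ℤ[T;T⁻¹]) • 1 := by
  induction n with
  | zero => simp
  | succ n ih =>
    rw [zpow_add_one, Units.val_mul, map_mul, ih, psi_z hφ, smul_mul_smul_comm, mul_one, ← T_add]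
    ring_nf
  | pred n ih =>
    rw [zpow_sub_one, Units.val_mul, map_mul, ih, psi_z_inv hφ, smul_mul_smul_comm, mul_one,
      ← T_add]
    ring_nf

theorem psi_ua_zpow (hφ : IsSingularBurau φ) (m : ℤ) :
    (∃ c : ℤ, c * c = 1 ∧ psi φ (ua ^ m : SB3ˣ) 0 0 = C c * T m) ∧
      psi φ (ua ^ m : SB3ˣ) 1 0 = 0 ∧ psi φ (ua ^ m : SB3ˣ) 1 1 = 1 := by
  induction m with
  | zero => exact ⟨⟨1, by simp⟩, by simp⟩
  | succ m ih =>
    obtain ⟨⟨c, hc, h0⟩, h1, h2⟩ := ih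
    rw [zpow_add_one, Units.val_mul, map_mul, psi_ua hφ]
    simp only [Matrix.mul_apply, Fin.sum_univ_two, h0, h1, h2]
    exact ⟨⟨-c, by simpa using hc, by
      change C c * T m * (-T 1) + _ * 0 = _
      rw [T_add, map_neg]; ring⟩, by simp⟩
  | pred m ih =>
    obtain ⟨⟨c, hc, h0⟩, h1, h2⟩ := ih
    rw [zpow_sub_one, Units.val_mul, map_mul, psi_ua_inv hφ]
    simp only [Matrix.mul_apply, Fin.sum_univ_two, h0, h1, h2]
    exact ⟨⟨-c, by simpa using hc, by
      change C c * T (-m) * (-T (-1)) + _ * 0 = _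
      rw [sub_eq_add_neg, T_add, map_neg]; ring⟩, by simp⟩

theorem psi_zpow (hφ : IsSingularBurau φ) (m n : ℤ) :
    (∃ c : ℤ, c * c = 1 ∧ psi φ (ua ^ m * z ^ n : SB3ˣ) 0 0 = C c * T (m + 3 * n)) ∧
      psi φ (ua ^ m * z ^ n : SB3ˣ) 1 0 = 0 ∧
      psi φ (ua ^ m * z ^ n : SB3ˣ) 1 1 = T (3 * n) := by
  obtain ⟨⟨c, hc, h0⟩, h1, h2⟩ := psi_ua_zpow hφ m
  rw [Units.val_mul, map_mul, psi_z_zpow hφ, mul_smul_comm, mul_one]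
  simp only [Matrix.smul_apply, h0, h1, h2, smul_eq_mul]
  exact ⟨⟨c, hc, by rw [T_add]; ring⟩, by simp⟩

theorem T_eq_one {n : ℤ} (h : (T n : ℤ[T;T⁻¹]) = 1) : n = 0 := by
  have := congrArg (fun f : ℤ[T;T⁻¹] => f.degree) h
  rw [← T_zero] at this
  simp only [degree_T] at this
  exact_mod_cast this

/-- The braid `σ₁ᵐ Δ²ⁿ` acts trivially only for `m = n = 0`. -/
theorem zpow_eq_one (hφ : IsSingularBurau φ) {m n : ℤ}
    (h : psi φ (ua ^ m * z ^ n : SB3ˣ) = 1) : ua ^ m * z ^ n = 1 := by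
  obtain ⟨⟨c, hc, h0⟩, -, h2⟩ := psi_zpow hφ m n
  rw [h] at h0 h2
  have hn : n = 0 := by
    have := T_eq_one (n := 3 * n) (by simpa using h2.symm)
    omega
  subst hn
  have hm : m + m = 0 := by
    apply T_eq_one
    have h0' : C c * T m = (1 : ℤ[T;T⁻¹]) := by simpa using h0.symm
    have e : (C c * T m) * (C c * T m) = (1 : ℤ[T;T⁻¹]) := by rw [h0', one_mul]
    rw [mul_mul_mul_comm, ← map_mul, hc, ← T_add] at e
    simpa using e
  have : m = 0 := by omega
  simp [this]

theorem rho_ua (hφ : IsSingularBurau φ) : rho φ ua = !![1, 1; 0, 1] := by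
  ext i j
  rw [rho_apply, psi_ua hφ]
  fin_cases i <;> fin_cases j <;> simp

theorem rho_ub (hφ : IsSingularBurau φ) : rho φ ub = !![1, 0; -1, 1] := by
  ext i j
  rw [rho_apply, psi_ub hφ]
  fin_cases i <;> fin_cases j <;> simp

theorem rho_ub_inv (hφ : IsSingularBurau φ) : rho φ (ub⁻¹ : SB3ˣ) = !![1, 0; 1, 1] := by
  ext i j
  rw [rho_apply, psi_ub_inv hφ]
  fin_cases i <;> fin_cases j <;> simp

theorem rho_zpow (hφ : IsSingularBurau φ) (m n : ℤ) :
    rho φ (ua ^ m * z ^ n : SB3ˣ) 0 0 ≠ 0 ∧ rho φ (ua ^ m * z ^ n : SB3ˣ) 1 0 = 0 := by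
  obtain ⟨⟨c, hc, h0⟩, h1, -⟩ := psi_zpow hφ m n
  rw [rho_apply, rho_apply, h0, h1]
  refine ⟨?_, map_zero _⟩
  rw [map_mul, eval₂_C, eval₂_T]
  refine mul_ne_zero ?_ (Units.ne_zero _)
  rintro rfl
  simp at hc

/-- Positive words act on the first basis vector within the nonnegative quadrant, off the second
axis, and only powers of `σ₁` keep it on the first axis. -/
theorem rho_pos (hφ : IsSingularBurau φ) {p : SB3ˣ} (hp : Pos ua ub p) :
    0 < rho φ p 0 0 ∧ 0 ≤ rho φ p 1 0 ∧ (rho φ p 1 0 = 0 → ∃ n : ℤ, p = ua ^ n) := by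
  induction hp with
  | one => exact ⟨by simp, by simp, fun _ => ⟨0, by simp⟩⟩
  | consA p _ ih =>
    obtain ⟨h0, h1, h2⟩ := ih
    simp only [Units.val_mul, map_mul, rho_ua hφ, Matrix.mul_apply, Fin.sum_univ_two]
    refine ⟨by simp; omega, by simpa using h1, fun h => ?_⟩
    obtain ⟨n, rfl⟩ := h2 (by simpa using h)
    exact ⟨1 + n, by rw [zpow_add, zpow_one]⟩
  | consB p _ ih =>
    obtain ⟨h0, h1, h2⟩ := ih
    simp only [Units.val_mul, map_mul, rho_ub_inv hφ, Matrix.mul_apply, Fin.sum_univ_two]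
    refine ⟨by simpa using h0, by simp; omega, fun h => ?_⟩
    simp at h
    omega

/-- A braid whose image in `SL₂(ℤ)` preserves the line of the first basis vector lies in
`⟨σ₁, Δ²⟩`. -/
theorem stabiliser (hφ : IsSingularBurau φ) (u : B) (h : rho φ (u : SB3ˣ) 1 0 = 0) :
    ∃ m n : ℤ, (u : SB3ˣ) = ua ^ m * z ^ n := by
  rcases inS_of_mem_closure braid u.2 with ⟨p, hp, m, n, e⟩ | ⟨_, ⟨p, hp, m, n, rfl⟩, e⟩
  · obtain ⟨-, -, h2⟩ := rho_pos hφ hp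
    obtain ⟨h3, h4⟩ := rho_zpow hφ m n
    rw [e, Units.val_mul, map_mul, Matrix.mul_apply, Fin.sum_univ_two, h4, mul_zero, add_zero] at h
    obtain ⟨k, rfl⟩ := h2 ((mul_eq_zero.1 h).resolve_right h3)
    exact ⟨k + m, n, by rw [e, zpow_add, mul_assoc]⟩
  · exfalso
    obtain ⟨h0, -, -⟩ := rho_pos hφ hp
    obtain ⟨h3, h4⟩ := rho_zpow hφ m n
    have hΔ : rho φ (ua * ub * ua : SB3ˣ) = !![0, 1; -1, 0] := by
      simp [rho_ua hφ, rho_ub hφ]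
    rw [e, ← mul_assoc, Units.val_mul, map_mul, Matrix.mul_apply, Fin.sum_univ_two, h4, mul_zero,
      add_zero, Units.val_mul, map_mul, hΔ, Matrix.mul_apply, Fin.sum_univ_two] at h
    have := (mul_eq_zero.1 h).resolve_right h3
    simp at this
    omega

theorem stabiliser_psi (hφ : IsSingularBurau φ) (u : B) (h : psi φ (u : SB3ˣ) 1 0 = 0) :
    ∃ m n : ℤ, (u : SB3ˣ) = ua ^ m * z ^ n :=
  stabiliser hφ u (by rw [rho_apply, h, map_zero])

/-- The Burau representation of the braid group on three strands is faithful. -/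
theorem psi_injective (hφ : IsSingularBurau φ) {u v : B}
    (h : psi φ (u : SB3ˣ) = psi φ (v : SB3ˣ)) : u = v := by
  have e : psi φ ((v⁻¹ * u : B) : SB3ˣ) = 1 := by
    rw [Subgroup.coe_mul, Units.val_mul, map_mul, h, Subgroup.coe_inv, psi_inv_mul]
  obtain ⟨m, n, hmn⟩ := stabiliser_psi hφ (v⁻¹ * u) (by rw [e]; simp)
  rw [hmn] at e
  rw [zpow_eq_one hφ e] at hmn
  exact (inv_mul_eq_one.1 (Subtype.ext hmn)).symm

theorem phi_eq_map (hφ : IsSingularBurau φ) (u : B) :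
    φ (u : SB3ˣ) = (psi φ (u : SB3ˣ)).map Polynomial.C := by
  obtain ⟨u, hu⟩ := u
  have hmul : ∀ x y : SB3, φ x = (psi φ x).map Polynomial.C → φ y = (psi φ y).map Polynomial.C →
      φ (x * y) = (psi φ (x * y)).map Polynomial.C := fun x y hx hy => by
    rw [map_mul, map_mul, Matrix.map_mul, ← hx, ← hy]
  have h1 : φ ua = (psi φ ua).map Polynomial.C := by
    rw [psi_ua hφ]; refine Eq.trans hφ.1 ?_
    refine Matrix.ext fun i j => ?_
    fin_cases i <;> fin_cases j <;> simp
  have h2 : φ ub = (psi φ ub).map Polynomial.C := by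
    rw [psi_ub hφ]; refine Eq.trans hφ.2.1 ?_
    refine Matrix.ext fun i j => ?_
    fin_cases i <;> fin_cases j <;> simp
  have h3 : φ (ua⁻¹ : SB3ˣ) = (psi φ (ua⁻¹ : SB3ˣ)).map Polynomial.C := by
    rw [psi_ua_inv hφ]; refine Eq.trans hφ.2.2.2.1 ?_
    refine Matrix.ext fun i j => ?_
    fin_cases i <;> fin_cases j <;> simp
  have h4 : φ (ub⁻¹ : SB3ˣ) = (psi φ (ub⁻¹ : SB3ˣ)).map Polynomial.C := by
    rw [psi_ub_inv hφ]; refine Eq.trans hφ.2.2.2.2.1 ?_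
    refine Matrix.ext fun i j => ?_
    fin_cases i <;> fin_cases j <;> simp
  induction hu using Subgroup.closure_induction_left with
  | one => simp
  | mul_left x hx y _ ih =>
    rcases hx with rfl | rfl
    · exact hmul _ _ h1 ih
    · exact hmul _ _ h2 ih
  | inv_mul_cancel x hx y _ ih =>
    rcases hx with rfl | rfl
    · exact hmul _ _ h3 ih
    · exact hmul _ _ h4 ih

/-! ### Products of conjugates of `τ₁` and their leading coefficients in `y` -/

/-- `β(σ₁) - 1`, the coefficient of `y` in `β(τ₁)`. -/
def A₀ : Matrix (Fin 2) (Fin 2) ℤ[T;T⁻¹] := !![-1 - T 1, 1; 0, 0]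

/-- The coefficient of `y` in `β(u τ₁ u⁻¹)`. -/
def A (φ : SB3 →* Matrix (Fin 2) (Fin 2) RR) (u : B) : Matrix (Fin 2) (Fin 2) ℤ[T;T⁻¹] :=
  psi φ (u : SB3ˣ) * A₀ * psi φ ((u⁻¹ : B) : SB3ˣ)

theorem phi_tau (hφ : IsSingularBurau φ) (u : B) :
    φ (tau u) = 1 + (Polynomial.X : RR) • (A φ u).map Polynomial.C := by
  have h1 : φ (g .t1) = 1 + (Polynomial.X : RR) • A₀.map Polynomial.C := by
    rw [hφ.2.2.1]
    refine Matrix.ext fun i j => ?_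
    fin_cases i <;> fin_cases j <;> simp [A₀] <;> ring
  rw [tau, map_mul, map_mul, h1, mul_add, add_mul, mul_one, ← map_mul, Units.mul_inv, map_one, A,
    Matrix.map_mul, Matrix.map_mul, ← phi_eq_map hφ, ← phi_eq_map hφ, mul_smul_comm,
    smul_mul_assoc, Subgroup.coe_inv]

theorem coeff_prod (hφ : IsSingularBurau φ) (L : List B) (i j : Fin 2) :
    (φ (L.map tau).prod i j).coeff L.length = (L.map (A φ)).prod i j ∧
      ∀ n, L.length < n → (φ (L.map tau).prod i j).coeff n = 0 := by
  induction L generalizing i j with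
  | nil =>
    constructor
    · fin_cases i <;> fin_cases j <;> simp
    · intro n hn
      have : n ≠ 0 := by simp at hn; omega
      fin_cases i <;> fin_cases j <;> simp [Polynomial.coeff_one, this]
  | cons u L ih =>
    have e : ∀ n, (φ ((u :: L).map tau).prod i j).coeff (n + 1) =
        (φ (L.map tau).prod i j).coeff (n + 1) +
          ∑ k, A φ u i k * (φ (L.map tau).prod k j).coeff n := fun n => by
      rw [List.map_cons, List.prod_cons, map_mul, phi_tau hφ, add_mul, one_mul, smul_mul_assoc,
        Matrix.add_apply, Matrix.smul_apply, Polynomial.coeff_add, smul_eq_mul,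
        Polynomial.coeff_X_mul, Matrix.mul_apply, Polynomial.finsetSum_coeff]
      simp
    constructor
    · rw [List.length_cons, e, (ih i j).2 _ (Nat.lt_succ_self _), zero_add, List.map_cons,
        List.prod_cons, Matrix.mul_apply]
      simp only [(ih _ j).1]
    · rintro (_ | n) hn
      · simp at hn
      · rw [List.length_cons, Nat.add_lt_add_iff_right] at hn
        rw [e, (ih i j).2 _ (by omega)]
        simp [fun k => (ih k j).2 _ hn]

theorem A_apply (u : B) (i j : Fin 2) : A φ u i j =
    psi φ (u : SB3ˣ) i 0 * ((-1 - T 1) * psi φ ((u⁻¹ : B) : SB3ˣ) 0 j +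
      psi φ ((u⁻¹ : B) : SB3ˣ) 1 j) := by
  simp [A, A₀, Matrix.mul_apply, Fin.sum_univ_two]
  ring

theorem one_add_T_ne : (-1 - T 1 : ℤ[T;T⁻¹]) ≠ 0 := fun h => by
  -- evaluation at `t = 1`
  have := congrArg (LaurentPolynomial.eval₂ (RingHom.id ℤ) (1 : ℤˣ)) h
  simp at this

/-- The pairing of the row `(-1-t, 1)` with the first column of a Burau matrix never vanishes:
at `t = -1` it vanishes only on `⟨σ₁, Δ²⟩`, where it is `±(1+t)tᵏ`. -/
theorem pairing_ne (hφ : IsSingularBurau φ) (u : B) :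
    (-1 - T 1) * psi φ (u : SB3ˣ) 0 0 + psi φ (u : SB3ˣ) 1 0 ≠ 0 := by
  intro h
  have h' := congrArg (LaurentPolynomial.eval₂ (RingHom.id ℤ) (-1 : ℤˣ)) h
  have h1 : rho φ (u : SB3ˣ) 1 0 = 0 := by
    rw [rho_apply]
    simpa using h'
  obtain ⟨m, n, e⟩ := stabiliser hφ u h1
  obtain ⟨-, h3, -⟩ := psi_zpow hφ m n
  have h4 := (rho_zpow hφ m n).1
  rw [e, h3, add_zero] at h
  rw [rho_apply, (mul_eq_zero.1 h).resolve_left one_add_T_ne, map_zero] at h4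
  exact h4 rfl

/-- The leading coefficient has rank one, with column space spanned by the first column of the
Burau matrix of the first conjugator. -/
theorem prod_A (hφ : IsSingularBurau φ) (L : List B) (u : B) :
    ∃ w : Fin 2 → ℤ[T;T⁻¹], w ≠ 0 ∧
      ∀ i j, ((u :: L).map (A φ)).prod i j = psi φ (u : SB3ˣ) i 0 * w j := by
  induction L generalizing u with
  | nil =>
    refine ⟨fun j => (-1 - T 1) * psi φ ((u⁻¹ : B) : SB3ˣ) 0 j + psi φ ((u⁻¹ : B) : SB3ˣ) 1 j,
      fun h => ?_, fun i j => by simp [A_apply]⟩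
    -- multiply the row by the invertible matrix `psi φ u`
    have h0 := congrFun h 0
    have h1 := congrFun h 1
    have e0 := congrFun (congrFun (psi_inv_mul (φ := φ) (u : SB3ˣ)) 0) 1
    have e1 := congrFun (congrFun (psi_inv_mul (φ := φ) (u : SB3ˣ)) 1) 1
    simp only [Subgroup.coe_inv, Pi.zero_apply] at h0 h1
    simp [Matrix.mul_apply, Fin.sum_univ_two] at e0 e1
    apply one_ne_zero (α := ℤ[T;T⁻¹])
    linear_combination psi φ (u : SB3ˣ) 0 1 * h0 + psi φ (u : SB3ˣ) 1 1 * h1 -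
      (-1 - T 1) * e0 - e1
  | cons v L ih =>
    obtain ⟨w, hw, h⟩ := ih v
    refine ⟨_, smul_ne_zero (pairing_ne hφ (u⁻¹ * v)) hw, fun i j => ?_⟩
    rw [List.map_cons, List.prod_cons, Matrix.mul_apply, Fin.sum_univ_two, h, h, A_apply, A_apply]
    rw [Subgroup.coe_mul, Units.val_mul, map_mul, Matrix.mul_apply, Matrix.mul_apply,
      Fin.sum_univ_two, Fin.sum_univ_two, Pi.smul_apply, smul_eq_mul]
    ring

theorem col_ne (u : B) : ∃ i, psi φ (u : SB3ˣ) i 0 ≠ 0 := by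
  by_contra! h
  have e := congrFun (congrFun (psi_inv_mul (φ := φ) (u : SB3ˣ)) 0) 0
  simp [Matrix.mul_apply, h] at e

/-- The degree in `y` of the matrix recovers the number of singular points. -/
theorem length_le (hφ : IsSingularBurau φ) {L L' : List B}
    (h : φ (L.map tau).prod = φ (L'.map tau).prod) : L.length ≤ L'.length := by
  by_contra! hlt
  cases L with
  | nil => simp at hlt
  | cons u L =>
    obtain ⟨w, hw, hprod⟩ := prod_A hφ L u
    obtain ⟨j, hj⟩ := Function.ne_iff.1 hw
    obtain ⟨i, hi⟩ := col_ne (φ := φ) u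
    have h1 := (coeff_prod hφ (u :: L) i j).1
    rw [h, (coeff_prod hφ L' i j).2 _ hlt, hprod] at h1
    exact mul_ne_zero hi hj h1.symm

/-- The first conjugate of `τ₁` is determined by the column space of the leading coefficient. -/
theorem head_eq (hφ : IsSingularBurau φ) {L L' : List B} {u v : B}
    (hlen : L.length = L'.length)
    (h : φ ((u :: L).map tau).prod = φ ((v :: L').map tau).prod) : tau u = tau v := by
  obtain ⟨w, hw, hprod⟩ := prod_A hφ L u
  obtain ⟨w', -, hprod'⟩ := prod_A hφ L' v
  obtain ⟨j, hj⟩ := Function.ne_iff.1 hw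
  have key : ∀ i, psi φ (u : SB3ˣ) i 0 * w j = psi φ (v : SB3ˣ) i 0 * w' j := fun i => by
    rw [← hprod, ← hprod', ← (coeff_prod hφ _ i j).1, ← (coeff_prod hφ _ i j).1, h,
      List.length_cons, List.length_cons, hlen]
  have e := congrFun (congrFun (psi_inv_mul (φ := φ) (v : SB3ˣ)) 1) 0
  simp [Matrix.mul_apply, Fin.sum_univ_two] at e
  have h0 : psi φ ((v⁻¹ * u : B) : SB3ˣ) 1 0 * w j = 0 := by
    rw [Subgroup.coe_mul, Units.val_mul, map_mul, Matrix.mul_apply, Fin.sum_univ_two,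
      Subgroup.coe_inv]
    linear_combination psi φ ((v : SB3ˣ)⁻¹ : SB3ˣ) 1 0 * key 0 +
      psi φ ((v : SB3ˣ)⁻¹ : SB3ˣ) 1 1 * key 1 + w' j * e
  obtain ⟨m, n, hmn⟩ := stabiliser_psi hφ _ ((mul_eq_zero.1 h0).resolve_right hj)
  exact tau_eq hmn

theorem phi_t1_cancel (hφ : IsSingularBurau φ) {x y : SB3}
    (h : φ (g .t1 * x) = φ (g .t1 * y)) : φ x = φ y := by
  have hdet : (φ (g .t1)).det ≠ 0 := by
    rw [hφ.2.2.1, Matrix.det_fin_two_of]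
    intro h0
    have := congrArg (Polynomial.eval 0) h0
    simp at this
  rw [map_mul, map_mul] at h
  have h' := congrArg (fun M => (φ (g .t1)).adjugate * M) h
  simp only [← mul_assoc, Matrix.adjugate_mul, smul_mul_assoc, one_mul] at h'
  exact smul_right_injective _ hdet h'

theorem phi_unit_cancel (u : SB3ˣ) {x y : SB3} (h : φ (u * x) = φ (u * y)) : φ x = φ y := by
  have := congrArg (fun M => φ (u⁻¹ : SB3ˣ) * M) h
  simpa only [← map_mul, Units.inv_mul_cancel_left] using this

theorem phi_tau_cancel (hφ : IsSingularBurau φ) (u : B) {x y : SB3}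
    (h : φ (tau u * x) = φ (tau u * y)) : φ x = φ y := by
  simp only [tau, mul_assoc] at h
  exact phi_unit_cancel _ (phi_t1_cancel hφ (phi_unit_cancel _ h))

theorem prod_injective (hφ : IsSingularBurau φ) (L L' : List B)
    (h : φ (L.map tau).prod = φ (L'.map tau).prod) :
    (L.map tau).prod = (L'.map tau).prod := by
  have hlen : L.length = L'.length := le_antisymm (length_le hφ h) (length_le hφ h.symm)
  induction L generalizing L' with
  | nil => rw [List.length_eq_zero_iff.1 hlen.symm]
  | cons u L ih =>
    cases L' with
    | nil => simp at hlen
    | cons v L' =>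
      have hlen' : L.length = L'.length := by simpa using hlen
      have huv := head_eq hφ hlen' h
      simp only [List.map_cons, List.prod_cons, huv] at h ⊢
      rw [ih L' (phi_tau_cancel hφ v h) hlen']

theorem psi_prod (hφ : IsSingularBurau φ) (L : List B) : psi φ (L.map tau).prod = 1 := by
  induction L with
  | nil => simp
  | cons u L ih =>
    rw [List.map_cons, List.prod_cons, map_mul, ih, mul_one, psi, MonoidHom.comp_apply,
      phi_tau hφ]
    refine Matrix.ext fun i j => ?_
    fin_cases i <;> fin_cases j <;> simp

end

end SB3

/-- the singular Burau representation `β_s : SB3 →* M₂(R)` is faithful. -/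
theorem singularBurau_faithful (φ : SB3 →* Matrix (Fin 2) (Fin 2) RR)
    (hφ : IsSingularBurau φ) : Function.Injective φ := by
  intro x y h
  obtain ⟨L, u, rfl⟩ := SB3.exists_normal x
  obtain ⟨L', v, rfl⟩ := SB3.exists_normal y
  -- the specialisation `y = 0` kills the singular part
  have huv : u = v := by
    apply SB3.psi_injective hφ
    have h0 : SB3.psi φ _ = SB3.psi φ _ := congrArg (fun M =>
      ((Polynomial.evalRingHom (0 : LaurentPolynomial ℤ)).mapMatrix.toMonoidHom) M) h
    simpa only [map_mul, SB3.psi_prod hφ, one_mul] using h0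
  subst huv
  have h1 := congrArg (fun M => M * φ ((u : SB3ˣ)⁻¹ : SB3ˣ)) h
  simp only [← map_mul, Units.mul_inv_cancel_right] at h1
  rw [SB3.prod_injective hφ L L' h1]
end

section
/- The singular Burau representation extends to a faithful representation of the group SG_3: the group homomorphism from SG_3 to GL₂(R') determined by σ_1 ↦ [[−t, 1], [0, 1]], σ_2 ↦ [[1, 0], [t, −t]], τ ↦ [[1−y−ty, y], [0, 1]] is injective, where R' is the localization of R = ℤ[t, t⁻¹][y] away from the element 1−y−ty (so that all three matrices are invertible over R'). -/
/-!
Write `a = σ₁`, `b = σ₂`, `z = (ba)³`, `H = ⟨a, b⟩` and `A = ⟨a, z⟩`. The element `z` is central in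
`SG3`, and `τ` commutes with `A`, so `SG3` is spanned by alternating products of elements of `H`
and powers of `τ` in which no interior `H`-letter lies in `A` (`AmalgForm`). Only the existence of
such an expression is used, not its uniqueness.

Two specialisations of the representation drive the proof.

* At `t = -1`, `y = 0` the matrices of `a`, `b` generate `SL₂(ℤ)`. An element of `H` whose matrix
  there has lower left entry `0` lies in `A` (`cusp_stabilizer`). This comes from the normal form
  `z ^ c * α * w * β` of `H` (`NF`), in which `w` is a positive word in `a⁻¹`, `b` and so has an
  explicit sign pattern (`PosWord.matrix`).
* Over the field `K(y)`, `K = Frac ℤ[t,t⁻¹]`, with the valuation `v` at `y = ∞`, the commuting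
  matrices of `a` and `τ` are both diagonal in the coordinates `α = (1+t)w₀ - w₁`, `β = w₁`, with
  `τ` acting by `diag(u, 1)`, where `u = 1 - y - ty` satisfies `v u > 1`. In these coordinates the
  matrix of an element of `H` is, up to the factor `1 + t`, a matrix over `ℤ[t,t⁻¹]` whose four
  entries are all congruent to `± r` modulo `1 + t`, `r` being the lower left entry of the original
  matrix. Outside `A` they are therefore all nonzero, hence of valuation `1`.

Consequently a nonzero power of `τ` sends vectors with `v α = v β ≠ 0` to vectors with `v α ≠ v β`,
and elements of `H` outside `A` do the reverse: this is a ping-pong on vectors. It shows that an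
alternating product containing `τ` never acts as an element of `H` does, and the kernel is thus
contained in `H`, where it lies in `A`, and is trivial since `a` acts by `diag(-t, 1)` and `z` by
the scalar `t³`.
-/

/-- Generators of the group `SG3`. -/
inductive SG3Gen : Type
  | s1 | s2 | t

open FreeGroup in
/-- Relators of `SG3`: `σ₁σ₂σ₁ = σ₂σ₁σ₂`, `σ₁τ = τσ₁`, `(σ₂σ₁)³τ = τ(σ₂σ₁)³`. -/
def SG3Rels : Set (FreeGroup SG3Gen) :=
  {of .s1 * of .s2 * of .s1 * (of .s2 * of .s1 * of .s2)⁻¹,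
   of .s1 * of .t * (of .t * of .s1)⁻¹,
   (of .s2 * of .s1) ^ 3 * of .t * (of .t * (of .s2 * of .s1) ^ 3)⁻¹}

/-- The group `SG3`. -/
abbrev SG3 : Type := PresentedGroup SG3Rels

/-- The generators of `SG3` as elements. -/
abbrev SG3.g (x : SG3Gen) : SG3 := PresentedGroup.of x

noncomputable section

open LaurentPolynomial Polynomial

/-- `R'`, the localization of `R` away from `1 - y - t y`. -/
abbrev RL : Type := Localization.Away (1 - Ry - Rt * Ry)

/-- The image of `t` in `R'`. -/
abbrev RLt : RL := algebraMap RR RL Rt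
/-- The image of `y` in `R'`. -/
abbrev RLy : RL := algebraMap RR RL Ry

namespace SG3Faithful

/-! ### Normal form for the braid group and the stabilizer of the cusp -/

section Group

variable {G : Type*} [Group G]

/-- Membership in the submonoid generated by `l` and `r`, with words built from the left. -/
inductive PosWord (l r : G) : G → Prop
  | one : PosWord l r 1
  | left {w : G} : PosWord l r w → PosWord l r (l * w)
  | right {w : G} : PosWord l r w → PosWord l r (r * w)

/-- The normal form `z ^ c * α * w * β` with `α ∈ {1, y, y⁻¹}`, `β ∈ {1, x}` and `w` a positive word
in `x⁻¹ * y` and `x * y⁻¹`. For `x = σ₁σ₂σ₁`, `y = σ₁σ₂` these two letters are `σ₁⁻¹` and `σ₂`; modulo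
the central element `z = x² = y³` this is the normal form of the free product `ℤ/2 * ℤ/3`. -/
def NF (x y z g : G) : Prop :=
  ∃ (c : ℤ) (w α β : G), PosWord (x⁻¹ * y) (x * y⁻¹) w ∧ (α = 1 ∨ α = y ∨ α = y⁻¹) ∧
    (β = 1 ∨ β = x) ∧ g = z ^ c * (α * w * β)

variable {x y z : G}

lemma NF.one : NF x y z 1 := ⟨0, 1, 1, 1, .one, by simp, by simp, by simp⟩

lemma NF.zpow_mul {g : G} (h : NF x y z g) (k : ℤ) : NF x y z (z ^ k * g) := by
  obtain ⟨c, w, α, β, hw, hα, hβ, rfl⟩ := h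
  exact ⟨k + c, w, α, β, hw, hα, hβ, by rw [zpow_add, mul_assoc (z ^ k)]⟩

lemma NF.y_mul (hz : ∀ g, Commute z g) (hy : y * y * y = z) {g : G} (h : NF x y z g) :
    NF x y z (y * g) := by
  obtain ⟨c, w, α, β, hw, hα, hβ, rfl⟩ := h
  have hc : y * z ^ c = z ^ c * y := ((hz y).zpow_left c).eq.symm
  rw [← mul_assoc, hc]
  rcases hα with rfl | rfl | rfl
  · exact ⟨c, w, y, β, hw, by simp, hβ, by simp [mul_assoc]⟩
  · exact ⟨c + 1, w, α⁻¹, β, hw, by simp, hβ, by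
      rw [zpow_add_one, ← hy]; simp [mul_assoc]⟩
  · exact ⟨c, w, 1, β, hw, by simp, hβ, by simp [mul_assoc]⟩

lemma NF.x_mul (hz : ∀ g, Commute z g) (hx : x * x = z) {g : G} (h : NF x y z g) :
    NF x y z (x * g) := by
  obtain ⟨c, w, α, β, hw, hα, hβ, rfl⟩ := h
  have hc : x * z ^ c = z ^ c * x := ((hz x).zpow_left c).eq.symm
  rw [← mul_assoc, hc]
  rcases hα with rfl | rfl | rfl
  · cases hw with
    | one =>
      rcases hβ with rfl | rfl
      · exact ⟨c, 1, 1, x, .one, by simp, by simp, by simp⟩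
      · exact ⟨c + 1, 1, 1, 1, .one, by simp, by simp, by
          rw [zpow_add_one, ← hx]; simp [mul_assoc]⟩
    | @left w hw => exact ⟨c, w, y, β, hw, by simp, hβ, by simp [mul_assoc]⟩
    | @right w hw => exact ⟨c + 1, w, y⁻¹, β, hw, by simp, hβ, by
          rw [zpow_add_one, ← hx]; simp [mul_assoc]⟩
  · exact ⟨c + 1, _, 1, β, hw.left, by simp, hβ, by
      rw [zpow_add_one, ← hx]; simp [mul_assoc]⟩
  · exact ⟨c, _, 1, β, hw.right, by simp, hβ, by simp [mul_assoc]⟩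

lemma NF.of_mem_closure (hz : ∀ g, Commute z g) (hx : x * x = z) (hy : y * y * y = z)
    {a b : G} (ha : a = y⁻¹ * x) (hb : b = x * y⁻¹) {g : G}
    (hg : g ∈ Subgroup.closure {a, b}) : NF x y z g := by
  have X : ∀ {g}, NF x y z g → NF x y z (x * g) := fun h => h.x_mul hz hx
  have Y : ∀ {g}, NF x y z g → NF x y z (y * g) := fun h => h.y_mul hz hy
  have Z : ∀ {g}, NF x y z g → NF x y z (z⁻¹ * g) := fun h => by
    simpa using h.zpow_mul (-1)
  have yi : y⁻¹ = z⁻¹ * (y * y) := by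
    rw [eq_inv_mul_iff_mul_eq, ← hy]; simp [mul_assoc]
  have xi : x⁻¹ = z⁻¹ * x := by
    rw [eq_inv_mul_iff_mul_eq, ← hx]; simp [mul_assoc]
  have Xinv : ∀ {g}, NF x y z g → NF x y z (x⁻¹ * g) := fun h => by
    rw [xi, mul_assoc]; exact Z (X h)
  have Yinv : ∀ {g}, NF x y z g → NF x y z (y⁻¹ * g) := fun h => by
    rw [yi, mul_assoc, mul_assoc]; exact Z (Y (Y h))
  induction hg using Subgroup.closure_induction_left with
  | one => exact NF.one
  | mul_left u hu g _ ih =>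
    rcases hu with rfl | rfl
    · rw [ha, mul_assoc]; exact Yinv (X ih)
    · rw [hb, mul_assoc]; exact X (Yinv ih)
  | inv_mul_cancel u hu g _ ih =>
    rcases hu with rfl | rfl
    · rw [ha, mul_inv_rev, inv_inv, mul_assoc]; exact Xinv (Y ih)
    · rw [hb, mul_inv_rev, inv_inv, mul_assoc]; exact Y (Xinv ih)

/-- Positive words in `!![1, -1; 0, 1]` and `!![1, 0; -1, 1]` have positive diagonal and nonpositive
off-diagonal entries; a zero off the diagonal occurs only for powers of a single letter. -/
lemma PosWord.matrix {ψ : G →* Matrix (Fin 2) (Fin 2) ℤ} {l r : G}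
    (hl : ψ l = !![1, -1; 0, 1]) (hr : ψ r = !![1, 0; -1, 1]) {w : G} (hw : PosWord l r w) :
    ∃ p q m s : ℤ, ψ w = !![p, -q; -m, s] ∧ 0 < p ∧ 0 ≤ q ∧ 0 ≤ m ∧ 0 < s ∧
      (m = 0 → ∃ n : ℕ, w = l ^ n) ∧ (q = 0 → ∃ n : ℕ, w = r ^ n) := by
  induction hw with
  | one =>
    exact ⟨1, 0, 0, 1, by rw [map_one, Matrix.one_fin_two]; simp, by simp, by simp, by simp,
      by simp, fun _ => ⟨0, by simp⟩, fun _ => ⟨0, by simp⟩⟩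
  | @left w _ ih =>
    obtain ⟨p, q, m, s, hψ, hp, hq, hm, hs, h1, h2⟩ := ih
    refine ⟨p + m, q + s, m, s, ?_, by omega, by omega, hm, hs, fun h => ?_, fun h => by omega⟩
    · rw [map_mul, hl, hψ, Matrix.mul_fin_two]; congr! 3 <;> ring_nf
    · obtain ⟨n, rfl⟩ := h1 h
      exact ⟨n + 1, (pow_succ' _ _).symm⟩
  | @right w _ ih =>
    obtain ⟨p, q, m, s, hψ, hp, hq, hm, hs, h1, h2⟩ := ih
    refine ⟨p, q, p + m, q + s, ?_, hp, hq, by omega, by omega, fun h => by omega, fun h => ?_⟩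
    · rw [map_mul, hr, hψ, Matrix.mul_fin_two]; congr! 3 <;> ring_nf
    · obtain ⟨n, rfl⟩ := h2 h
      exact ⟨n + 1, (pow_succ' _ _).symm⟩

lemma zpow_matrix {ψ : G →* Matrix (Fin 2) (Fin 2) ℤ} (h : ψ z = -1) (c : ℤ) :
    ψ (z ^ c) = 1 ∨ ψ (z ^ c) = -1 := by
  have h' : ψ z⁻¹ = -1 := by
    have := congrArg ψ (mul_inv_cancel z)
    rw [map_mul, h, map_one] at this
    simpa using congrArg Neg.neg this
  induction c with
  | zero => simp
  | succ i ih => rw [zpow_add_one, map_mul, h]; rcases ih with e | e <;> rw [e] <;> simp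
  | pred i ih => rw [zpow_sub_one, map_mul, h']; rcases ih with e | e <;> rw [e] <;> simp

/-- An element of `⟨a, b⟩` whose image in `SL₂(ℤ)` fixes the cusp `∞` lies in `⟨a, z⟩`. -/
lemma cusp_stabilizer (hz : ∀ g, Commute z g) {a b : G} (h : a * b * a = b * a * b)
    (hzdef : (b * a) ^ 3 = z) {ψ : G →* Matrix (Fin 2) (Fin 2) ℤ}
    (ha : ψ a = !![1, 1; 0, 1]) (hb : ψ b = !![1, 0; -1, 1])
    {g : G} (hg : g ∈ Subgroup.closure {a, b}) (h0 : ψ g 1 0 = 0) :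
    ∃ i j : ℤ, g = a ^ i * z ^ j := by
  obtain ⟨x, hxd⟩ : ∃ x, x = a * b * a := ⟨_, rfl⟩
  obtain ⟨y, hyd⟩ : ∃ y, y = a * b := ⟨_, rfl⟩
  have hxd' : x = b * a * b := hxd.trans h
  have hxy : x = y * a := by rw [hxd, hyd]
  have hx : x * x = z := by
    rw [← hzdef]; nth_rw 1 [hxd']; simp [hxd, pow_succ, mul_assoc]
  have hy : y * y * y = z := by
    rw [← hx]; nth_rw 2 [hxd']; simp [hxd, hyd, mul_assoc]
  have hax : a = y⁻¹ * x := by simp [hxd, hyd, mul_assoc]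
  have hbx : b = x * y⁻¹ := by rw [eq_mul_inv_iff_mul_eq, hxd', hyd, mul_assoc]
  have hconj : SemiconjBy x a b := by
    rw [SemiconjBy]; nth_rw 2 [hxd]; rw [hxd']; simp [mul_assoc]
  have hl : ψ (x⁻¹ * y) = !![1, -1; 0, 1] := by
    have e : x⁻¹ * y = a⁻¹ := by rw [hax]; simp
    rw [e]
    calc ψ a⁻¹ = ψ a⁻¹ * (ψ a * !![1, -1; 0, 1]) := by
          rw [ha, Matrix.mul_fin_two]; norm_num [← Matrix.one_fin_two]
      _ = _ := by rw [← mul_assoc, ← map_mul]; simp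
  have hr : ψ (x * y⁻¹) = !![1, 0; -1, 1] := by rw [← hbx, hb]
  have hψy : ψ y = !![0, 1; -1, 1] := by
    rw [hyd, map_mul, ha, hb, Matrix.mul_fin_two]; norm_num
  have hψx : ψ x = !![0, 1; -1, 0] := by
    rw [hxy, map_mul, hψy, ha, Matrix.mul_fin_two]; norm_num
  have hψy' : ψ y⁻¹ = !![1, -1; 1, 0] := by
    calc ψ y⁻¹ = ψ y⁻¹ * (ψ y * !![1, -1; 1, 0]) := by
          rw [hψy, Matrix.mul_fin_two]; norm_num [← Matrix.one_fin_two]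
      _ = _ := by rw [← mul_assoc, ← map_mul]; simp
  have hψz : ψ z = -1 := by
    rw [← hx, map_mul, hψx, Matrix.mul_fin_two, Matrix.one_fin_two]; simp
  obtain ⟨c, w, α, β, hw, hα, hβ, rfl⟩ := NF.of_mem_closure hz hx hy hax hbx hg
  obtain ⟨p, q, m, s, hψ, hp, hq, hm, hs, h1, h2⟩ := hw.matrix hl hr
  have h0' : (ψ α * ψ w * ψ β) 1 0 = 0 := by
    rw [map_mul, map_mul, map_mul] at h0
    rcases zpow_matrix hψz c with e | e <;> simpa [e] using h0
  suffices H : ∃ i : ℤ, α * w * β = a ^ i by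
    obtain ⟨i, hi⟩ := H
    exact ⟨i, c, by rw [hi, ((hz _).zpow_left c).eq]⟩
  rw [hψ] at h0'
  rcases hα with rfl | rfl | rfl <;> rcases hβ with rfl | rfl <;>
    simp only [map_one, one_mul, mul_one, hψx, hψy, hψy', Matrix.mul_fin_two, Matrix.of_apply,
      Matrix.cons_val', Matrix.cons_val_zero, Matrix.cons_val_one, Matrix.cons_val_fin_one] at h0'
  · obtain ⟨n, rfl⟩ := h1 (by omega)
    have e : x⁻¹ * y = a⁻¹ := by rw [hax]; simp
    exact ⟨-n, by rw [e]; simp⟩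
  · omega
  · omega
  · omega
  · omega
  -- `y⁻¹ * b ^ n * x = y⁻¹ * x * a ^ n = a ^ (n + 1)`, as `x` conjugates `a` to `b`
  · obtain ⟨n, rfl⟩ := h2 (by omega)
    refine ⟨n + 1, ?_⟩
    rw [← hbx, mul_assoc, ← (hconj.pow_right n).eq, ← mul_assoc, ← hax]
    norm_cast
    rw [pow_succ']

end Group
end SG3Faithful

namespace SG3Faithful

open Matrix hiding zpow_add zpow_add_one zpow_sub_one one_zpow zpow_neg zpow_mul
  mul_inv_rev

/-! ### Alternating products -/

section TauWord

variable {G : Type*} [Group G]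

/-- Alternating products `τ ^ n₁ * b₁ * τ ^ n₂ * ⋯ * τ ^ nₖ` with `k ≥ 1`, all `nᵢ ≠ 0` and all `bᵢ`
in `H` but not in `A`. -/
inductive TauWord (H : Subgroup G) (A : G → Prop) (τ : G) : G → Prop
  | pow {n : ℤ} : n ≠ 0 → TauWord H A τ (τ ^ n)
  | cons {n : ℤ} {b p : G} : n ≠ 0 → b ∈ H → ¬ A b → TauWord H A τ p →
      TauWord H A τ (τ ^ n * (b * p))

variable {H : Subgroup G} {A : G → Prop} {τ : G}

/-- `g` lies in `H`, or is an alternating product multiplied on both sides by elements of `H`. -/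
def AmalgForm (H : Subgroup G) (A : G → Prop) (τ g : G) : Prop :=
  g ∈ H ∨ ∃ b ∈ H, ∃ c ∈ H, ∃ p, TauWord H A τ p ∧ g = b * (p * c)

lemma AmalgForm.mul_left {g h : G} (hh : h ∈ H) (hg : AmalgForm H A τ g) :
    AmalgForm H A τ (h * g) := by
  rcases hg with hg | ⟨b, hb, c, hc, p, hp, rfl⟩
  · exact .inl (H.mul_mem hh hg)
  · exact .inr ⟨h * b, H.mul_mem hh hb, c, hc, p, hp, by rw [mul_assoc]⟩

lemma AmalgForm.zpow_mul (hA : ∀ g, A g → Commute τ g) {g : G} (hg : AmalgForm H A τ g)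
    {k : ℤ} (hk : k ≠ 0) : AmalgForm H A τ (τ ^ k * g) := by
  rcases hg with hg | ⟨b, hb, c, hc, p, hp, rfl⟩
  · exact .inr ⟨1, H.one_mem, g, hg, _, .pow hk, by simp⟩
  by_cases hbA : A b
  · have hcomm : τ ^ k * b = b * τ ^ k := ((hA b hbA).zpow_left k).eq
    rw [← mul_assoc, hcomm, mul_assoc]
    refine AmalgForm.mul_left hb ?_
    cases hp with
    | @pow n hn =>
      by_cases hkn : k + n = 0
      · exact .inl (by rw [← mul_assoc, ← zpow_add, hkn]; simpa using hc)
      · exact .inr ⟨1, H.one_mem, c, hc, _, .pow hkn, by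
          rw [← mul_assoc, ← zpow_add, one_mul]⟩
    | @cons n b' p' hn hb' hbA' hp' =>
      by_cases hkn : k + n = 0
      · refine .inr ⟨b', hb', c, hc, p', hp', ?_⟩
        rw [← mul_assoc, ← mul_assoc, ← zpow_add, hkn]; simp [mul_assoc]
      · refine .inr ⟨1, H.one_mem, c, hc, _, .cons hkn hb' hbA' hp', ?_⟩
        rw [zpow_add]; simp [mul_assoc]
  · exact .inr ⟨1, H.one_mem, c, hc, _, .cons hk hb hbA hp, by simp [mul_assoc]⟩

end TauWord

/-! ### Ping-pong with a valuation -/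

section PingPong

variable {L : Type*} [Field L] {Γ : Type*} [LinearOrderedCommGroupWithZero Γ]

/-- The coordinate `(1 + t) w₀ - w₁`. Together with `w₁` it gives the coordinates of `w` in the common
eigenbasis `(1, 0)`, `(1, 1 + t)` of `σ₁` and `τ`, both scaled by `1 + t`. -/
def alpha (t : L) (w : Fin 2 → L) : L := (1 + t) * w 0 - w 1

/-- `M` acts as `diag(s, r)` in the coordinates `alpha t w`, `w 1`. -/
def Diag (t : L) (M : Matrix (Fin 2) (Fin 2) L) (s r : L) : Prop :=
  ∀ w, alpha t (M *ᵥ w) = s * alpha t w ∧ (M *ᵥ w) 1 = r * w 1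

lemma Diag.mul {t : L} {M N : Matrix (Fin 2) (Fin 2) L} {s r s' r' : L} (h : Diag t M s r)
    (h' : Diag t N s' r') : Diag t (M * N) (s * s') (r * r') := fun w => by
  rw [← mulVec_mulVec, (h _).1, (h _).2, (h' _).1, (h' _).2, mul_assoc, mul_assoc]
  exact ⟨rfl, rfl⟩

lemma Diag.zpow {G : Type*} [Group G] {Φ : G →* Matrix (Fin 2) (Fin 2) L} {t s r : L} {g : G}
    (h : Diag t (Φ g) s r) (hs : s ≠ 0) (hr : r ≠ 0) (n : ℤ) :
    Diag t (Φ (g ^ n)) (s ^ n) (r ^ n) := by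
  have hinv : Diag t (Φ g⁻¹) s⁻¹ r⁻¹ := fun w => by
    have key := h (Φ g⁻¹ *ᵥ w)
    rw [mulVec_mulVec, ← map_mul, mul_inv_cancel, map_one, one_mulVec] at key
    rw [key.1, key.2, inv_mul_cancel_left₀ hs, inv_mul_cancel_left₀ hr]
    exact ⟨rfl, rfl⟩
  induction n with
  | zero => intro w; simp
  | succ i ih =>
    rw [zpow_add_one, map_mul, zpow_add_one₀ hs, zpow_add_one₀ hr]; exact ih.mul h
  | pred i ih =>
    rw [zpow_sub_one, map_mul, zpow_sub_one₀ hs, zpow_sub_one₀ hr]; exact ih.mul hinv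

/-- The two eigencoordinates of `w` have distinct valuations. -/
def Apart (v : Valuation L Γ) (t : L) (w : Fin 2 → L) : Prop := v (alpha t w) ≠ v (w 1)

/-- The two eigencoordinates of `w` are nonzero and have the same valuation. -/
def Balanced (v : Valuation L Γ) (t : L) (w : Fin 2 → L) : Prop :=
  v (alpha t w) = v (w 1) ∧ v (w 1) ≠ 0

lemma Diag.apart {v : Valuation L Γ} {t u : L} (hu : 1 < v u) {n : ℤ} (hn : n ≠ 0)
    {M : Matrix (Fin 2) (Fin 2) L} (hM : Diag t M (u ^ n) (1 ^ n)) {w : Fin 2 → L}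
    (hw : Balanced v t w) : Apart v t (M *ᵥ w) := by
  intro h
  rw [(hM w).1, (hM w).2, one_zpow, one_mul, map_mul, map_zpow₀, hw.1] at h
  have h1 : v u ^ n = 1 := mul_right_cancel₀ hw.2 (by rw [h, one_mul])
  exact hn ((zpow_eq_one_iff_right₀ (zero_le.trans hu.le) hu.ne').1 h1)

lemma val_comb (v : Valuation L Γ) {c d α β : L} (hc : v c = 1) (hd : v d = 1)
    (h : v α ≠ v β) : v (c * α + d * β) = max (v α) (v β) := by
  rw [Valuation.map_add_of_distinct_val] <;> simp [hc, hd, h]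

/-- The hypotheses say that all four entries of `!![p, q; r, s]` in the eigencoordinates have
valuation `1`, after multiplication by `1 + t`. -/
lemma balanced_of_apart {v : Valuation L Γ} {t p q r s : L} (ht : v (1 + t) = 1)
    (h1 : v r = 1) (h2 : v (r + s * (1 + t)) = 1) (h3 : v ((1 + t) * p - r) = 1)
    (h4 : v ((1 + t) * p - r + (1 + t) * ((1 + t) * q - s)) = 1) {w : Fin 2 → L}
    (hw : Apart v t w) : Balanced v t (!![p, q; r, s] *ᵥ w) := by
  have e1 : (1 + t) * (!![p, q; r, s] *ᵥ w) 1 =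
      r * alpha t w + (r + s * (1 + t)) * w 1 := by
    simp [alpha, mulVec, dotProduct, Fin.sum_univ_two]; ring
  have e2 : (1 + t) * alpha t (!![p, q; r, s] *ᵥ w) = ((1 + t) * p - r) * alpha t w +
      ((1 + t) * p - r + (1 + t) * ((1 + t) * q - s)) * w 1 := by
    simp [alpha, mulVec, dotProduct, Fin.sum_univ_two]; ring
  have f1 := congrArg v e1
  have f2 := congrArg v e2
  rw [val_comb v h1 h2 hw, map_mul, ht, one_mul] at f1
  rw [val_comb v h3 h4 hw, map_mul, ht, one_mul] at f2
  refine ⟨f2.trans f1.symm, fun h0 => hw ?_⟩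
  rw [f1] at h0
  have a0 : v (alpha t w) = 0 := le_antisymm (h0 ▸ le_max_left _ _) zero_le
  have b0 : v (w 1) = 0 := le_antisymm (h0 ▸ le_max_right _ _) zero_le
  rw [a0, b0]

end PingPong

/-! ### Triviality of the kernel -/

section Core

variable {L : Type*} [Field L] {Γ : Type*} [LinearOrderedCommGroupWithZero Γ]

/-- Evaluation at `t = -1`. -/
def ev : LaurentPolynomial ℤ →+* ℤ := LaurentPolynomial.eval₂ (RingHom.id ℤ) (-1)

lemma ev_T : ev (T 1) = -1 := by simp [ev]

lemma one_add_T_ne_zero : (1 + T 1 : LaurentPolynomial ℤ) ≠ 0 := fun h => by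
  simpa using congrArg (LaurentPolynomial.eval₂ (RingHom.id ℤ) 1) h

lemma zpow_T_eq_one {ι : LaurentPolynomial ℤ →+* L} (hι : Function.Injective ι) {n : ℤ}
    (h : ι (T 1) ^ n = 1) : n = 0 := by
  have h' : ι (T 1) ^ n.natAbs = 1 := by
    rcases Int.natAbs_eq n with e | e <;> rw [e] at h
    · exact_mod_cast h
    · rw [zpow_neg, inv_eq_one] at h; exact_mod_cast h
  rw [← map_pow, T_pow, ← map_one ι, ← T_zero] at h'
  have h2 := congrArg (LaurentPolynomial.eval₂ (Int.castRingHom ℚ) (Units.mk0 2 two_ne_zero)) (hι h')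
  rw [mul_one, eval₂_T_n, T_zero, map_one, Units.val_mk0] at h2
  by_contra hn
  exact absurd h2 (one_lt_pow₀ one_lt_two (Int.natAbs_ne_zero.2 hn)).ne.symm

/-- A homomorphism `Φ` given on the generators by the Burau matrices over a valued field, with `t`
behaving as a constant and `1 - y - ty` of valuation greater than `1`, has trivial kernel. The
homomorphism `θ` is the specialisation over `ℤ[t,t⁻¹]`; it is only constrained on `σ₁` and `σ₂`. -/
theorem core (v : Valuation L Γ) (ι : LaurentPolynomial ℤ →+* L)
    (hι : ∀ a, a ≠ 0 → v (ι a) = 1) (y : L) (hu : 1 < v (1 - y - ι (T 1) * y))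
    (Φ : SG3 →* Matrix (Fin 2) (Fin 2) L)
    (θ : SG3 →* Matrix (Fin 2) (Fin 2) (LaurentPolynomial ℤ))
    (hΦ1 : Φ (SG3.g .s1) = !![-ι (T 1), 1; 0, 1])
    (hΦ2 : Φ (SG3.g .s2) = !![1, 0; ι (T 1), -ι (T 1)])
    (hΦ3 : Φ (SG3.g .t) = !![1 - y - ι (T 1) * y, y; 0, 1])
    (hθ1 : θ (SG3.g .s1) = !![-T 1, 1; 0, 1])
    (hθ2 : θ (SG3.g .s2) = !![1, 0; T 1, -T 1])
    {g : SG3} (hg : Φ g = 1) : g = 1 := by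
  have hιinj : Function.Injective ι := by
    rw [injective_iff_map_eq_zero]
    intro a ha
    by_contra h
    simpa [ha] using hι a h
  have hrel : ∀ {r s : FreeGroup SG3Gen}, r * s⁻¹ ∈ SG3Rels →
      PresentedGroup.mk SG3Rels r = PresentedGroup.mk SG3Rels s := fun {r s} h => by
    have := PresentedGroup.one_of_mem h
    rwa [map_mul, map_inv, mul_inv_eq_one] at this
  obtain ⟨a, ha⟩ : ∃ a, a = SG3.g .s1 := ⟨_, rfl⟩
  obtain ⟨b, hb⟩ : ∃ b, b = SG3.g .s2 := ⟨_, rfl⟩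
  obtain ⟨τ, hτ⟩ : ∃ τ, τ = SG3.g .t := ⟨_, rfl⟩
  have rel1 : a * b * a = b * a * b := by
    rw [ha, hb]
    exact hrel (r := .of .s1 * .of .s2 * .of .s1) (s := .of .s2 * .of .s1 * .of .s2) (.inl rfl)
  have rel2 : a * τ = τ * a := by
    rw [ha, hτ]
    exact hrel (r := .of .s1 * .of .t) (s := .of .t * .of .s1) (.inr (.inl rfl))
  obtain ⟨z, hz⟩ : ∃ z, (b * a) ^ 3 = z := ⟨_, rfl⟩
  have rel3 : z * τ = τ * z := by
    rw [← hz, ha, hb, hτ]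
    exact hrel (r := (.of .s2 * .of .s1) ^ 3 * .of .t)
      (s := .of .t * (.of .s2 * .of .s1) ^ 3) (.inr (.inr rfl))
  rw [← ha] at hΦ1 hθ1
  rw [← hb] at hΦ2 hθ2
  rw [← hτ] at hΦ3
  have hgen : ∀ x : SG3Gen, SG3.g x = a ∨ SG3.g x = b ∨ SG3.g x = τ := by
    rintro (_ | _ | _) <;> simp [ha, hb, hτ]
  have hzc : ∀ g, Commute z g := by
    have hx : z = (a * b * a) * (a * b * a) := by
      rw [← hz]; nth_rw 1 [rel1]; simp [pow_succ, mul_assoc]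
    have h1 : SemiconjBy (a * b * a) a b := by
      rw [SemiconjBy]; nth_rw 1 [rel1]; simp [mul_assoc]
    have h2 : SemiconjBy (a * b * a) b a := by
      rw [SemiconjBy]; nth_rw 2 [rel1]; simp [mul_assoc]
    intro g
    have := PresentedGroup.generated_by SG3Rels (Subgroup.centralizer {z}) (fun x => by
      rw [Subgroup.mem_centralizer_singleton_iff]
      rcases hgen x with h | h | h <;> rw [SG3.g] at h <;> rw [h]
      · rw [hx]; exact (h2.mul_left h1).eq.symm
      · rw [hx]; exact (h1.mul_left h2).eq.symm
      · exact rel3.symm) g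
    exact (Subgroup.mem_centralizer_singleton_iff.1 this).symm
  obtain ⟨H, hH⟩ : ∃ H, H = Subgroup.closure {a, b} := ⟨_, rfl⟩
  have haH : a ∈ H := hH ▸ Subgroup.subset_closure (by simp)
  have hbH : b ∈ H := hH ▸ Subgroup.subset_closure (by simp)
  obtain ⟨A, hA⟩ : ∃ A : SG3 → Prop, ∀ g, A g ↔ ∃ i j : ℤ, g = a ^ i * z ^ j :=
    ⟨_, fun _ => Iff.rfl⟩
  have hAτ : ∀ g, A g → Commute τ g := fun g h => by
    obtain ⟨i, j, rfl⟩ := (hA g).1 h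
    exact (Commute.zpow_right rel2.symm i).mul_right (((hzc τ).symm).zpow_right j)
  obtain ⟨t, ht⟩ : ∃ t, t = ι (T 1) := ⟨_, rfl⟩
  rw [← ht] at hΦ1 hΦ2 hΦ3 hu
  obtain ⟨u, hud⟩ : ∃ u, u = 1 - y - t * y := ⟨_, rfl⟩
  rw [← hud] at hu hΦ3
  have hv1t : v (1 + t) = 1 := by
    rw [ht, ← map_one ι, ← map_add]; exact hι _ one_add_T_ne_zero
  have ht0 : t ≠ 0 := by
    rw [ht]; exact (map_ne_zero_iff ι hιinj).2 (isUnit_T 1).ne_zero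
  have hu0 : u ≠ 0 := by rintro rfl; simp at hu
  have h1t0 : 1 + t ≠ 0 := fun h => by simp [h] at hv1t
  have dτ : Diag t (Φ τ) u 1 := fun w => by
    rw [hΦ3, hud]; simp [alpha, mulVec, dotProduct, Fin.sum_univ_two]; ring
  have da : Diag t (Φ a) (-t) 1 := fun w => by
    rw [hΦ1]; simp [alpha, mulVec, dotProduct, Fin.sum_univ_two]; ring
  have hΦz : Φ z = !![t ^ 3, 0; 0, t ^ 3] := by
    rw [← hz, map_pow, map_mul, hΦ1, hΦ2, pow_succ, pow_two]
    simp only [Matrix.mul_fin_two]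
    congr! 3 <;> ring_nf
  have dz : Diag t (Φ z) (t ^ 3) (t ^ 3) := fun w => by
    rw [hΦz]; simp [alpha, mulVec, dotProduct, Fin.sum_univ_two]; ring
  have dA : ∀ i j : ℤ, Diag t (Φ (a ^ i * z ^ j)) ((-t) ^ i * (t ^ 3) ^ j) (1 ^ i * (t ^ 3) ^ j) :=
    fun i j => by
      rw [map_mul]
      exact (da.zpow (neg_ne_zero.2 ht0) one_ne_zero i).mul
        (dz.zpow (pow_ne_zero 3 ht0) (pow_ne_zero 3 ht0) j)
  have hvt : v t = 1 := by rw [ht]; exact hι _ (isUnit_T 1).ne_zero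
  have hΦθ : ∀ g ∈ H, Φ g = ι.mapMatrix (θ g) := by
    intro g hg
    rw [hH] at hg
    refine MonoidHom.eqOn_closure (f := Φ)
      (g := (ι.mapMatrix (m := Fin 2)).toMonoidHom.comp θ) ?_ hg
    rintro x (rfl | rfl)
    · ext i j; fin_cases i <;> fin_cases j <;> simp [hΦ1, hθ1, ht]
    · ext i j; fin_cases i <;> fin_cases j <;> simp [hΦ2, hθ2, ht]
  have hcusp : ∀ g ∈ H, ev (θ g 1 0) = 0 → A g := by
    intro g hg h0
    rw [hA]
    refine cusp_stabilizer hzc rel1 hz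
      (ψ := (ev.mapMatrix (m := Fin 2)).toMonoidHom.comp θ) ?_ ?_ (hH ▸ hg)
      (by simpa using h0)
    · ext i j; fin_cases i <;> fin_cases j <;> simp [hθ1, ev_T]
    · ext i j; fin_cases i <;> fin_cases j <;> simp [hθ2, ev_T]
  have hbal : ∀ g ∈ H, ¬ A g → ∀ w, Apart v t w → Balanced v t (Φ g *ᵥ w) := by
    intro g hg hgA w hw
    have h0 : ev (θ g 1 0) ≠ 0 := fun h => hgA (hcusp g hg h)
    -- at `t = -1` each of the four entries below becomes `± ev (θ g 1 0)`
    have key : ∀ x, ev x ≠ 0 → v (ι x) = 1 := fun x hx => hι x (by rintro rfl; simp at hx)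
    rw [hΦθ g hg, Matrix.eta_fin_two (ι.mapMatrix (θ g))]
    refine balanced_of_apart hv1t ?_ ?_ ?_ ?_ hw
    · exact key _ h0
    · convert key (θ g 1 0 + θ g 1 1 * (1 + T 1)) (by simpa [ev_T] using h0)
      rw [ht, map_add, map_mul, map_add, map_one]; rfl
    · convert key ((1 + T 1) * θ g 0 0 - θ g 1 0) (by simpa [ev_T] using h0)
      rw [ht, map_sub, map_mul, map_add, map_one]; rfl
    · convert key ((1 + T 1) * θ g 0 0 - θ g 1 0 +
        (1 + T 1) * ((1 + T 1) * θ g 0 1 - θ g 1 1)) (by simpa [ev_T] using h0)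
      rw [ht, map_add, map_sub, map_mul, map_mul, map_sub, map_mul, map_add, map_one]; rfl
  -- The vector `(1, 0)` is `Apart` and stays so under `τ`, being an eigenvector.
  have hword : ∀ p, TauWord H A τ p → (∀ w, Balanced v t w → Apart v t (Φ p *ᵥ w)) ∧
      Apart v t (Φ p *ᵥ ![1, 0]) := by
    intro p hp
    induction hp with
    | @pow n hn =>
      have d := dτ.zpow hu0 one_ne_zero n
      refine ⟨fun w hw => d.apart hu hn hw, ?_⟩
      rw [Apart, (d _).1, (d _).2]
      simp [alpha, zpow_ne_zero, hu0, h1t0]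
    | @cons n b p hn hb hbA hp ih =>
      have d := dτ.zpow hu0 one_ne_zero n
      rw [map_mul, map_mul]
      simp only [← mulVec_mulVec]
      exact ⟨fun w hw => d.apart hu hn (hbal b hb hbA _ (ih.1 w hw)),
        d.apart hu hn (hbal b hb hbA _ ih.2)⟩
  have hform : AmalgForm H A τ g := by
    have : g ∈ Subgroup.closure (Set.range (PresentedGroup.of (rels := SG3Rels))) := by
      rw [PresentedGroup.closure_range_of]; trivial
    clear hg
    induction this using Subgroup.closure_induction_left with
    | one => exact .inl H.one_mem
    | mul_left x hx g _ ih =>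
      obtain ⟨x, rfl⟩ := hx
      rcases hgen x with h | h | h <;> rw [SG3.g] at h <;> rw [h]
      · exact ih.mul_left haH
      · exact ih.mul_left hbH
      · simpa using ih.zpow_mul hAτ (k := 1) (by simp)
    | inv_mul_cancel x hx g _ ih =>
      obtain ⟨x, rfl⟩ := hx
      rcases hgen x with h | h | h <;> rw [SG3.g] at h <;> rw [h]
      · exact ih.mul_left (H.inv_mem haH)
      · exact ih.mul_left (H.inv_mem hbH)
      · simpa using ih.zpow_mul hAτ (k := -1) (by simp)
  -- `(2, 1 + t)` has both eigencoordinates equal to `1 + t`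
  have hw0 : Balanced v t ![2, 1 + t] := by
    have : alpha t ![2, 1 + t] = 1 + t := by simp [alpha]; ring
    exact ⟨by rw [this]; simp, by simp [hv1t]⟩
  rcases hform with hgH | ⟨β, hβ, c, hc, p, hp, rfl⟩
  · obtain ⟨i, j, rfl⟩ := (hA g).1 (hcusp g hgH (by
      have := hΦθ g hgH
      rw [hg] at this
      have h10 : ι (θ g 1 0) = 0 := by simpa using (congrFun (congrFun this 1) 0).symm
      rw [(map_eq_zero_iff ι hιinj).1 h10, map_zero]))
    have d := dA i j ![2, 1 + t]
    rw [hg, one_mulVec] at d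
    have e0 : alpha t ![2, 1 + t] = 1 + t := by simp [alpha]; ring
    have e1 : (![2, 1 + t] : Fin 2 → L) 1 = 1 + t := by simp
    rw [e0, e1] at d
    have d2 : (t ^ 3) ^ j = 1 := by
      have := mul_right_cancel₀ h1t0 ((one_mul _).trans d.2)
      simpa using this.symm
    have d1 : (-t) ^ i = 1 := by
      have := mul_right_cancel₀ h1t0 ((one_mul _).trans d.1)
      rw [d2, mul_one] at this
      exact this.symm
    have hj : 3 * j = 0 := zpow_T_eq_one hιinj (by
      rw [← ht, zpow_mul]; exact_mod_cast d2)
    have hi : 2 * i = 0 := zpow_T_eq_one hιinj (by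
      rw [← ht, zpow_mul]
      have : t ^ (2 : ℤ) = (-t) ^ (2 : ℤ) := by norm_cast; ring
      rw [this, ← zpow_mul, mul_comm, zpow_mul, d1, one_zpow])
    obtain rfl : j = 0 := by omega
    obtain rfl : i = 0 := by omega
    simp
  -- If `β * p * c` acts trivially, `p` acts as `d = (c * β)⁻¹ ∈ H`. The vector `(2, 1 + t)` excludes
  -- `d ∈ A`, and `(1, 0)` excludes `d ∉ A`.
  · exfalso
    have hd : (c * β)⁻¹ ∈ H := H.inv_mem (H.mul_mem hc hβ)
    have hpd : Φ p = Φ (c * β)⁻¹ := by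
      have e : p = β⁻¹ * (β * (p * c)) * c⁻¹ := by group
      rw [e, map_mul, map_mul Φ β⁻¹, hg, mul_one, ← map_mul, mul_inv_rev]
    by_cases hdA : A (c * β)⁻¹
    · have h1 := (hword p hp).1 _ hw0
      obtain ⟨i, j, hij⟩ := (hA _).1 hdA
      rw [hpd, hij] at h1
      apply h1
      rw [(dA i j _).1, (dA i j _).2, map_mul, map_mul, hw0.1]
      simp [hvt]
    · have h1 := (hword p hp).2
      rw [hpd] at h1
      refine h1 (hbal _ hd hdA _ ?_).1
      simp [Apart, alpha, h1t0]

end Core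
end SG3Faithful

/-- the (extended) singular Burau representation of the group
`SG3`, sending `σ₁ ↦ [[-t,1],[0,1]]`, `σ₂ ↦ [[1,0],[t,-t]]`,
`τ ↦ [[1-y-ty, y],[0,1]]` in `GL₂(R')`, is injective. -/
theorem SG3_burau_faithful (φ : SG3 →* GL (Fin 2) RL)
    (h1 : (φ (SG3.g .s1) : Matrix (Fin 2) (Fin 2) RL) = !![-RLt, 1; 0, 1])
    (h2 : (φ (SG3.g .s2) : Matrix (Fin 2) (Fin 2) RL) = !![1, 0; RLt, -RLt])
    (h3 : (φ (SG3.g .t) : Matrix (Fin 2) (Fin 2) RL) =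
      !![1 - RLy - RLt * RLy, RLy; 0, 1]) :
    Function.Injective φ := by
  classical
  let K := FractionRing (LaurentPolynomial ℤ)
  let ι : LaurentPolynomial ℤ →+* RatFunc K :=
    (RatFunc.C (K := K)).comp (algebraMap (LaurentPolynomial ℤ) K)
  let v := RatFunc.inftyValuation K
  have hι : ∀ a, a ≠ 0 → v (ι a) = 1 := fun a ha =>
    RatFunc.inftyValuation.C K
      ((map_ne_zero_iff _ (IsFractionRing.injective (LaurentPolynomial ℤ) K)).2 ha)
  have hu : 1 < v (1 - RatFunc.X - ι (T 1) * RatFunc.X) := by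
    have e : (1 - RatFunc.X - ι (T 1) * RatFunc.X : RatFunc K) =
        1 - ι (1 + T 1) * RatFunc.X := by rw [map_add, map_one]; ring
    have hX : v (ι (1 + T 1) * RatFunc.X) = WithZero.exp 1 := by
      rw [map_mul, hι _ SG3Faithful.one_add_T_ne_zero, one_mul]
      exact RatFunc.inftyValuation.X K
    have h1 : (1 : WithZero (Multiplicative ℤ)) < WithZero.exp 1 := by
      rw [← WithZero.exp_zero, WithZero.exp_lt_exp]; exact zero_lt_one
    rw [e, Valuation.map_sub_eq_of_lt_right, hX]
    · exact h1
    · rw [hX, map_one]; exact h1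
  -- `f` maps the localization into `K(y)`; `e` is the specialisation `y = 0`
  let f₀ : RR →+* RatFunc K := Polynomial.eval₂RingHom ι RatFunc.X
  have hf₀ : IsUnit (f₀ (1 - Ry - Rt * Ry)) := by
    rw [isUnit_iff_ne_zero]
    intro h
    simp only [f₀, map_sub, map_one, map_mul, Polynomial.coe_eval₂RingHom, Polynomial.eval₂_X,
      Polynomial.eval₂_C] at h
    simp [h] at hu
  let f : RL →+* RatFunc K := IsLocalization.Away.lift (1 - Ry - Rt * Ry) hf₀
  let e₀ : RR →+* LaurentPolynomial ℤ := Polynomial.evalRingHom 0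
  have he₀ : IsUnit (e₀ (1 - Ry - Rt * Ry)) := by simp [e₀]
  let e : RL →+* LaurentPolynomial ℤ := IsLocalization.Away.lift (1 - Ry - Rt * Ry) he₀
  have ft : f RLt = ι (T 1) := by
    simp only [f, RLt, IsLocalization.Away.lift_eq]; simp [f₀]
  have fy : f RLy = RatFunc.X := by
    simp only [f, RLy, IsLocalization.Away.lift_eq]; simp [f₀]
  have et : e RLt = T 1 := by
    simp only [e, RLt, IsLocalization.Away.lift_eq]; simp [e₀]
  let Φ : SG3 →* Matrix (Fin 2) (Fin 2) (RatFunc K) :=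
    (f.mapMatrix (m := Fin 2)).toMonoidHom.comp
      ((Units.coeHom (Matrix (Fin 2) (Fin 2) RL)).comp φ)
  let θ : SG3 →* Matrix (Fin 2) (Fin 2) (LaurentPolynomial ℤ) :=
    (e.mapMatrix (m := Fin 2)).toMonoidHom.comp
      ((Units.coeHom (Matrix (Fin 2) (Fin 2) RL)).comp φ)
  have hΦ : ∀ g, Φ g = (φ g : Matrix (Fin 2) (Fin 2) RL).map f := fun g => rfl
  have hθ : ∀ g, θ g = (φ g : Matrix (Fin 2) (Fin 2) RL).map e := fun g => rfl
  rw [injective_iff_map_eq_one]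
  intro g hg
  refine SG3Faithful.core v ι hι RatFunc.X hu Φ θ ?_ ?_ ?_ ?_ ?_ (g := g) ?_
  · rw [hΦ, h1]; ext i j; fin_cases i <;> fin_cases j <;> simp [ft]
  · rw [hΦ, h2]; ext i j; fin_cases i <;> fin_cases j <;> simp [ft]
  · rw [hΦ, h3]; ext i j; fin_cases i <;> fin_cases j <;> simp [ft, fy]
  · rw [hθ, h1]; ext i j; fin_cases i <;> fin_cases j <;> simp [et]
  · rw [hθ, h2]; ext i j; fin_cases i <;> fin_cases j <;> simp [et]
  · rw [hΦ, hg]; simp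

end
end
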